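/- Let G be the group presented by the generating set S and relation set R of Theorem 2.14 (the presentation of the virtual Thompson group VF) as described in the context. Then G has the unique extraction of roots property: for all a, b ∈ G and every integer n ≥ 1, if aⁿ = bⁿ then a = b. -/

import Mathlib

/-- The alphabet Σ = {x, v}. -/
inductive Letter : Type
  | x | v
deriving DecidableEq

/-- Words on Σ (possibly empty). -/
abbrev Word := List Letter

/-- A target word t ∈ {xx, xv, vx, vv}, encoded as the pair of its two letters. -/
abbrev Tgt := Letter × Letter

/-- The word (of length two) corresponding to a target. -/
def tw (t : Tgt) : Word := [t.1, t.2]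

/-- Index for the three generators of family (i): X_{v→vv}, X_{v→vx}, X_{v→xv}. -/
inductive G1 : Type
  | vv   -- X_{v→vv}
  | vx   -- X_{v→vx}
  | xv   -- X_{v→xv}
deriving DecidableEq

/-- Index for the four kinds of generators of family (iii):
X_{x→vv,u}, X_{x→vx,u}, X_{v→xx,u}, X_{v→xv,u}. -/
inductive G3 : Type
  | xvv  -- X_{x→vv,u}
  | xvx  -- X_{x→vx,u}
  | vxx  -- X_{v→xx,u}
  | vxv  -- X_{v→xv,u}
deriving DecidableEq

/-- The generating set S of the presentation of the virtual Thompson group VF. -/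
inductive Gen : Type
  /-- family (i): X_{v→vv}, X_{v→vx}, X_{v→xv} -/
  | fam1 : G1 → Gen
  /-- family (ii): X_{a, s→t, u} with a ∈ {x,v}, s ∈ {x,v}, t ∈ {xx,xv,vx,vv}, u any word -/
  | fam2 : Letter → Letter → Tgt → Word → Gen
  /-- family (iii): X_{c, u} with c one of x→vv, x→vx, v→xx, v→xv and u a nonempty word -/
  | fam3 : G3 → {u : Word // u ≠ []} → Gen

/-- The corresponding generator of the free group on S. -/
def X (g : Gen) : FreeGroup Gen := FreeGroup.of g

open Letter in
/-- The relators of the presentation of VF (each relation A·B = C·D becomes the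
relator A·B·(C·D)⁻¹). -/
inductive VFRel : FreeGroup Gen → Prop
  /-- (R1) and (R2): for a ∈ {x, v},
  X_{a,s₁→t₁, p s₂ q} X_{a,s₂→t₂, q} = X_{a,s₂→t₂, q} X_{a,s₁→t₁, p t₂ q}. -/
  | r12 (a s₁ s₂ : Letter) (t₁ t₂ : Tgt) (p q : Word) :
      VFRel (X (.fam2 a s₁ t₁ (p ++ [s₂] ++ q)) * X (.fam2 a s₂ t₂ q) *
        (X (.fam2 a s₂ t₂ q) * X (.fam2 a s₁ t₁ (p ++ tw t₂ ++ q)))⁻¹)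
  /-- (R3): X_{x,s→t,q} X_{x→vv, p t q} = X_{x→vv, p s q} X_{v,s→t,q}. -/
  | r3 (s : Letter) (t : Tgt) (p q : Word) :
      VFRel (X (.fam2 x s t q) * X (.fam3 .xvv ⟨p ++ tw t ++ q, by simp [tw]⟩) *
        (X (.fam3 .xvv ⟨p ++ [s] ++ q, by simp⟩) * X (.fam2 v s t q))⁻¹)
  /-- (R4): X_{x,s→t,q} X_{x→vx, p t q} = X_{x→vx, p s q} X_{v,s→t,q}. -/
  | r4 (s : Letter) (t : Tgt) (p q : Word) :
      VFRel (X (.fam2 x s t q) * X (.fam3 .xvx ⟨p ++ tw t ++ q, by simp [tw]⟩) *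
        (X (.fam3 .xvx ⟨p ++ [s] ++ q, by simp⟩) * X (.fam2 v s t q))⁻¹)
  /-- (R5): X_{v,s→t,q} X_{v→xx, p t q} = X_{v→xx, p s q} X_{x,s→t,q}. -/
  | r5 (s : Letter) (t : Tgt) (p q : Word) :
      VFRel (X (.fam2 v s t q) * X (.fam3 .vxx ⟨p ++ tw t ++ q, by simp [tw]⟩) *
        (X (.fam3 .vxx ⟨p ++ [s] ++ q, by simp⟩) * X (.fam2 x s t q))⁻¹)
  /-- (R6): X_{v,s→t,q} X_{v→xv, p t q} = X_{v→xv, p s q} X_{x,s→t,q}. -/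
  | r6 (s : Letter) (t : Tgt) (p q : Word) :
      VFRel (X (.fam2 v s t q) * X (.fam3 .vxv ⟨p ++ tw t ++ q, by simp [tw]⟩) *
        (X (.fam3 .vxv ⟨p ++ [s] ++ q, by simp⟩) * X (.fam2 x s t q))⁻¹)

/-- The set of relators. -/
def VFrels : Set (FreeGroup Gen) := {g | VFRel g}

/-- The virtual Thompson group VF, as the presented group ⟨S | R⟩. -/
abbrev VF := PresentedGroup VFrels

/-!
Contracting a spanning tree of the Squier complex embeds `VF` into a diagram group, so it suffices
that `aⁿ = bⁿ` implies `a = b` in diagram groups. Let a word tile a part of the line by unit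
intervals. An application of a rule then stretches an interval of the line, and the interval with
its rule is a letter; letters on disjoint intervals commute. Sending an edge of the Squier complex
to the pair of the Magnus unit `1 + v X` of its letter `v` and the stretch gives a homomorphism to
`(1 + X A⟦X⟧) ⋊ Γ`, where `A` is the trace algebra on the letters and `Γ` is a group of order
automorphisms of the line with linear right germs. It is injective on each diagram group, because a
shortest path has a reduced trace of letters, and a product of Magnus units and their inverses along
a nonempty reduced trace is not `1`.

In the semidirect product roots are unique. They are unique in `Γ` by a germ argument. The lowest
coefficient `δ` at which two `n`-th roots with the same component `g` in `Γ` differ satisfies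
`∑ i < n, gⁱ δ = 0`, and then `δ = 0`, since each finite `g`-orbit of traces is a single point.
-/

/-! ### Maps without nontrivial periods -/

section TrivialPeriods

open Function

variable {α : Type*} {f : α → α}

/-- A self-map has trivial periods if each of its periodic points is fixed. -/
def HasTrivialPeriods (f : α → α) : Prop :=
  ∀ x ∈ periodicPts f, IsFixedPt f x

lemma mem_periodicPts_of_forall_iterate_mem (hf : Injective f) {s : Set α} (hs : s.Finite) {x : α}
    (h : ∀ j, f^[j] x ∈ s) : x ∈ periodicPts f := by
  obtain ⟨i, j, hij, heq⟩ := hs.exists_lt_map_eq_of_forall_mem h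
  refine mk_mem_periodicPts (Nat.sub_pos_of_lt hij) (hf.iterate i ?_)
  rw [← iterate_add_apply, Nat.add_sub_cancel' hij.le, heq]

lemma HasTrivialPeriods.isFixedPt_of_forall_iterate_mem (h : HasTrivialPeriods f)
    (hf : Injective f) {n : ℕ} (hn : n ≠ 0) {s : Set α} (hs : s.Finite) {x : α}
    (hx : ∀ j, f^[n * j] x ∈ s) : IsFixedPt f x := by
  simp only [iterate_mul] at hx
  obtain ⟨m, hm, hmx⟩ := mem_periodicPts_of_forall_iterate_mem (hf.iterate n) hs hx
  rw [IsPeriodicPt, ← iterate_mul] at hmx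
  exact h x (mk_mem_periodicPts (Nat.mul_pos (Nat.pos_of_ne_zero hn) hm) hmx)

lemma HasTrivialPeriods.of_inverse {g : α → α} (h : HasTrivialPeriods f) (hl : LeftInverse g f)
    (hr : RightInverse g f) : HasTrivialPeriods g :=
  fun x ⟨n, hn, hx⟩ ↦ (h x ⟨n, hn, hx.to_leftInverse (hr.iterate n)⟩).to_leftInverse hl

lemma HasTrivialPeriods.eq_zero_of_sum_iterate_eq_zero {M : Type*} [AddCommGroup M]
    [IsAddTorsionFree M] (h : HasTrivialPeriods f) (hf : Injective f) {k : α → M}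
    (hk : k.support.Finite) {n : ℕ} (hn : n ≠ 0)
    (hsum : ∀ x, ∑ i ∈ Finset.range n, k (f^[i] x) = 0) : k = 0 := by
  have hper (x : α) : k (f^[n] x) = k x := by
    have hshift := Finset.sum_range_succ' (fun i ↦ k (f^[i] x)) n
    rw [Finset.sum_range_succ, hsum, zero_add] at hshift
    simpa [hsum (f x)] using hshift
  have hper_mul (x : α) (j : ℕ) : k (f^[n * j] x) = k x := by
    induction j with
    | zero => rfl
    | succ j ih => rw [Nat.mul_succ, add_comm, iterate_add_apply, hper, ih]
  funext x
  by_contra hx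
  have hfix : IsFixedPt f x :=
    h.isFixedPt_of_forall_iterate_mem hf hn hk fun j ↦ by rwa [mem_support, hper_mul]
  have hnx : n • k x = 0 := by simpa [(hfix.iterate _).eq] using hsum x
  exact hx ((smul_eq_zero_iff_right hn).mp hnx)

lemma comp_eq_self_of_comp_iterate_eq_self {β : Type*} [LinearOrder α] [PartialOrder β] {u : α → β}
    (hu : Monotone u) (hf : Monotone f) {n : ℕ} (hn : n ≠ 0) (h : u ∘ f^[n] = u) : u ∘ f = u := by
  funext t
  have hn' : 1 ≤ n := Nat.one_le_iff_ne_zero.mpr hn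
  rcases le_total t (f t) with ht | ht
  · exact ((hu (hf.monotone_iterate_of_le_map ht hn')).trans (congrFun h t).le).antisymm (hu ht)
  · exact (hu ht).antisymm ((congrFun h t).ge.trans (hu (hf.antitone_iterate_of_map_le ht hn')))

end TrivialPeriods

/-! ### Trace monoids -/

section TraceMonoid

variable {α : Type*} (G : SimpleGraph α)

/-- The trace monoid (free partially commutative monoid) on the vertices of `G`, in which adjacent
vertices commute. -/
abbrev TraceMonoid : Type _ :=
  PresentedMonoid fun a b : FreeMonoid α ↦ ∃ u v, G.Adj u v ∧
    a = FreeMonoid.of u * FreeMonoid.of v ∧ b = FreeMonoid.of v * FreeMonoid.of u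

namespace TraceMonoid

variable {M : Type*} [Monoid M]

/-- The letter of the trace monoid given by a vertex. -/
def of (u : α) : TraceMonoid G := PresentedMonoid.of _ u

variable {G}

lemma commute_of {u v : α} (h : G.Adj u v) : Commute (of G u) (of G v) :=
  PresentedMonoid.mk_eq_mk_of_rel ⟨u, v, h, rfl, rfl⟩

/-- The universal property: a map on vertices sending adjacent vertices to commuting elements
extends to the trace monoid. -/
def lift (f : α → M) (hf : ∀ u v, G.Adj u v → Commute (f u) (f v)) : TraceMonoid G →* M :=
  PresentedMonoid.lift f (by
    rintro _ _ ⟨u, v, h, rfl, rfl⟩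
    simp only [map_mul, FreeMonoid.lift_eval_of]
    exact hf u v h)

lemma hom_ext {φ ψ : TraceMonoid G →* M} (h : ∀ u, φ (of G u) = ψ (of G u)) : φ = ψ :=
  PresentedMonoid.ext _ h

lemma exists_eq_prod_map_of (t : TraceMonoid G) : ∃ l : List α, t = (l.map (of G)).prod := by
  obtain ⟨a, rfl⟩ := PresentedMonoid.surjective_mk t
  refine ⟨a.toList, ?_⟩
  induction a with
  | one => rfl
  | of u => simp [of, PresentedMonoid.of]
  | mul a b ha hb => rw [map_mul, ha, hb, FreeMonoid.toList_mul, List.map_append, List.prod_append]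

/-- The multiset of letters of a trace. -/
def content : TraceMonoid G →* Multiplicative (Multiset α) :=
  lift (fun u ↦ .ofAdd {u}) fun _ _ _ ↦ .all _ _

lemma content_prod_map_of (l : List α) : content (l.map (of G)).prod = .ofAdd (l : Multiset α) := by
  induction l with
  | nil => exact map_one content
  | cons u l ih => rw [List.map_cons, List.prod_cons, map_mul, ih]; rfl

/-- The endomorphism induced by an automorphism of the graph. -/
def map (σ : G ≃g G) : TraceMonoid G →* TraceMonoid G :=
  lift (fun u ↦ of G (σ u)) fun _ _ h ↦ commute_of (σ.map_adj_iff.mpr h)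

@[simp]
lemma map_of (σ : G ≃g G) (u : α) : map σ (of G u) = of G (σ u) := rfl

lemma map_prod_map_of (σ : G ≃g G) (l : List α) :
    map σ (l.map (of G)).prod = ((l.map σ).map (of G)).prod := by
  simp only [map_list_prod, List.map_map, Function.comp_def, map_of]

lemma map_iterate_prod_map_of (σ : G ≃g G) (n : ℕ) (l : List α) :
    (map σ)^[n] (l.map (of G)).prod = ((l.map σ^[n]).map (of G)).prod := by
  induction n with
  | zero => simp
  | succ n ih => rw [Function.iterate_succ_apply', ih, map_prod_map_of, List.map_map (l := l),
      Function.iterate_succ']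

lemma map_comp_map (σ τ : G ≃g G) : (map σ).comp (map τ) = map (σ * τ) :=
  hom_ext fun _ ↦ rfl

lemma map_one : map (1 : G ≃g G) = MonoidHom.id _ :=
  hom_ext fun _ ↦ rfl

variable (G) in
/-- The action of the automorphisms of the graph on the trace monoid. -/
def autHom : (G ≃g G) →* MulAut (TraceMonoid G) where
  toFun σ := (map σ).toMulEquiv (map σ⁻¹) (by rw [map_comp_map, inv_mul_cancel, map_one])
    (by rw [map_comp_map, mul_inv_cancel, map_one])
  map_one' := MulEquiv.toMonoidHom_injective map_one
  map_mul' σ τ := MulEquiv.toMonoidHom_injective (map_comp_map σ τ).symm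

lemma hasTrivialPeriods_autHom {σ : G ≃g G} (h : HasTrivialPeriods σ) :
    HasTrivialPeriods (autHom G σ) := by
  intro t ⟨n, hn, ht⟩
  obtain ⟨l, rfl⟩ := exists_eq_prod_map_of t
  have horbit (j : ℕ) : ((l.map σ^[n * j] : List α) : Multiset α) = l := by
    have hj := congrArg content (ht.mul_const j).eq
    change content ((map σ)^[n * j] _) = _ at hj
    rwa [map_iterate_prod_map_of, content_prod_map_of, content_prod_map_of] at hj
  have hfix : ∀ u ∈ l, σ u = u := fun u hu ↦
    h.isFixedPt_of_forall_iterate_mem σ.injective hn.ne' l.finite_toSet fun j ↦ by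
      change σ^[n * j] u ∈ l
      rw [← Multiset.mem_coe, ← horbit j]
      exact List.mem_map_of_mem hu
  change map σ _ = _
  rw [map_prod_map_of, List.map_congr_left hfix, List.map_id']

end TraceMonoid

end TraceMonoid

/-! ### Principal units of a power series ring -/

noncomputable section PrincipalUnits

open scoped PowerSeries

variable {R S : Type*} [Ring R] [Ring S]

lemma coeff_X_pow_mul_self (d : ℕ) (z : R⟦X⟧) :
    PowerSeries.coeff d (PowerSeries.X ^ d * z) = PowerSeries.constantCoeff z := by
  rw [PowerSeries.coeff_X_pow_mul', if_pos le_rfl, Nat.sub_self,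
    PowerSeries.coeff_zero_eq_constantCoeff_apply]

lemma constantCoeff_map (f : R →+* S) (x : R⟦X⟧) :
    PowerSeries.constantCoeff (PowerSeries.map f x) = f (PowerSeries.constantCoeff x) := by
  simpa only [PowerSeries.coeff_zero_eq_constantCoeff_apply] using PowerSeries.coeff_map f 0 x

lemma X_pow_dvd_mul_sub_mul {d : ℕ} {x x' y y' : R⟦X⟧} (hx : PowerSeries.X ^ d ∣ x - x')
    (hy : PowerSeries.X ^ d ∣ y - y') :
    PowerSeries.X ^ d ∣ x * y - x' * y' ∧ PowerSeries.coeff d (x * y - x' * y') =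
      PowerSeries.coeff d (x - x') * PowerSeries.constantCoeff y +
        PowerSeries.constantCoeff x' * PowerSeries.coeff d (y - y') := by
  obtain ⟨z, hz⟩ := hx
  obtain ⟨w, hw⟩ := hy
  have key : x * y - x' * y' = PowerSeries.X ^ d * (z * y + x' * w) := by
    calc x * y - x' * y' = (x - x') * y + x' * (y - y') := by noncomm_ring
      _ = PowerSeries.X ^ d * (z * y) + PowerSeries.X ^ d * (x' * w) := by
        rw [hz, hw, mul_assoc, ← mul_assoc x', (PowerSeries.commute_X_pow x' d).eq, mul_assoc]
      _ = _ := (mul_add _ _ _).symm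
  refine ⟨⟨_, key⟩, ?_⟩
  rw [key, hz, hw, coeff_X_pow_mul_self, coeff_X_pow_mul_self,
    coeff_X_pow_mul_self, map_add, map_mul, map_mul]

variable (R) in
/-- The principal units `1 + X R⟦X⟧`, that is, the power series with constant coefficient `1`. -/
abbrev principalUnits : Submonoid R⟦X⟧ :=
  MonoidHom.mker (PowerSeries.constantCoeff (R := R))

namespace principalUnits

lemma constantCoeff_coe (x : principalUnits R) : PowerSeries.constantCoeff (x : R⟦X⟧) = 1 := x.2

instance : Group (principalUnits R) where
  inv x := ⟨PowerSeries.invOfUnit x 1, by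
    simp [MonoidHom.mem_mker]⟩
  inv_mul_cancel x := Subtype.ext (PowerSeries.invOfUnit_mul _ _ x.2)

/-- The homomorphism of principal units induced by a ring homomorphism. -/
def map (f : R →+* S) : principalUnits R →* principalUnits S :=
  ((PowerSeries.map f : R⟦X⟧ →* S⟦X⟧).comp (principalUnits R).subtype).codRestrict _ fun x ↦ by
    simp only [MonoidHom.mem_mker, MonoidHom.comp_apply]
    exact (constantCoeff_map f x).trans (by rw [constantCoeff_coe, map_one])

lemma coe_map (f : R →+* S) (x : principalUnits R) :
    (map f x : S⟦X⟧) = PowerSeries.map f x := rfl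

variable (R) in
/-- The action of the automorphisms of the coefficient ring. -/
def autHom : RingAut R →* MulAut (principalUnits R) where
  toFun σ := (map (σ : R →+* R)).toMulEquiv (map ((σ⁻¹ : RingAut R) : R →+* R))
    (by ext; simp [coe_map]) (by ext; simp [coe_map])
  map_one' := by ext; simp [coe_map]
  map_mul' σ τ := by ext; simp [coe_map]

lemma coeff_autHom (σ : RingAut R) (x : principalUnits R) (d : ℕ) :
    PowerSeries.coeff d (autHom R σ x : R⟦X⟧) = σ (PowerSeries.coeff d (x : R⟦X⟧)) :=
  PowerSeries.coeff_map (σ : R →+* R) d x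

/-- The principal unit `1 + a X`. -/
def oneAddMulX (a : R) : principalUnits R :=
  ⟨1 + PowerSeries.C a * PowerSeries.X, by simp [MonoidHom.mem_mker]⟩

lemma map_oneAddMulX (f : R →+* S) (a : R) : map f (oneAddMulX a) = oneAddMulX (f a) :=
  Subtype.ext (by simp [coe_map, oneAddMulX])

lemma coe_oneAddMulX_mul_oneAddMulX (a b : R) :
    (oneAddMulX a * oneAddMulX b : R⟦X⟧) =
      1 + PowerSeries.C (a + b) * PowerSeries.X + PowerSeries.C (a * b) * PowerSeries.X ^ 2 := by
  have hmul := (PowerSeries.commute_X (PowerSeries.C b)).symm.mul_mul_mul_comm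
    (PowerSeries.C a) PowerSeries.X
  simp only [oneAddMulX, mul_add, add_mul, one_mul, mul_one, map_add, map_mul, hmul, pow_two]
  abel

lemma commute_oneAddMulX {a b : R} (h : Commute a b) : Commute (oneAddMulX a) (oneAddMulX b) :=
  Subtype.ext <| by simp [coe_oneAddMulX_mul_oneAddMulX, h.eq, add_comm a]

lemma inv_oneAddMulX {a : R} (h : a * a = 0) : (oneAddMulX a)⁻¹ = oneAddMulX (-a) :=
  inv_eq_of_mul_eq_one_right <| Subtype.ext <| by simp [coe_oneAddMulX_mul_oneAddMulX, h]

lemma coeff_prod_map_oneAddMulX (l : List R) :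
    (∀ k, l.length < k → PowerSeries.coeff k ((l.map oneAddMulX).prod : R⟦X⟧) = 0) ∧
      PowerSeries.coeff l.length ((l.map oneAddMulX).prod : R⟦X⟧) = l.prod := by
  induction l with
  | nil => simp +contextual [PowerSeries.coeff_one, Nat.pos_iff_ne_zero]
  | cons a l ih =>
    obtain ⟨hgt, heq⟩ := ih
    have hcoeff (k : ℕ) : PowerSeries.coeff (k + 1) (((a :: l).map oneAddMulX).prod : R⟦X⟧) =
        PowerSeries.coeff (k + 1) ((l.map oneAddMulX).prod : R⟦X⟧) +
          a * PowerSeries.coeff k ((l.map oneAddMulX).prod : R⟦X⟧) := by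
      simp [oneAddMulX, add_mul, mul_assoc, PowerSeries.coeff_succ_X_mul]
    refine ⟨fun k hk ↦ ?_, ?_⟩
    · obtain ⟨k, rfl⟩ := Nat.exists_eq_succ_of_ne_zero (Nat.ne_zero_of_lt hk)
      rw [List.length_cons] at hk
      rw [hcoeff, hgt _ (by omega), hgt _ (by omega), mul_zero, add_zero]
    · rw [List.length_cons, hcoeff, hgt _ (by omega), heq, zero_add, List.prod_cons]

/-- The semidirect product `(1 + X R⟦X⟧) ⋊ Γ` for an action of `Γ` on the coefficient ring. -/
abbrev Semidirect {Γ : Type*} [Group Γ] (φ : Γ →* RingAut R) : Type _ :=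
  principalUnits R ⋊[(autHom R).comp φ] Γ

namespace Semidirect

variable {Γ : Type*} [Group Γ] {φ : Γ →* RingAut R}

lemma right_pow (x : Semidirect φ) (n : ℕ) : (x ^ n).right = x.right ^ n :=
  map_pow SemidirectProduct.rightHom x n

lemma X_pow_dvd_pow_left_sub {x y : Semidirect φ} (hright : x.right = y.right) {d : ℕ}
    (h : PowerSeries.X ^ d ∣ (x.left - y.left : R⟦X⟧)) (n : ℕ) :
    PowerSeries.X ^ d ∣ ((x ^ n).left - (y ^ n).left : R⟦X⟧) ∧
      PowerSeries.coeff d ((x ^ n).left - (y ^ n).left : R⟦X⟧) =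
        ∑ i ∈ Finset.range n, φ (x.right ^ i) (PowerSeries.coeff d (x.left - y.left : R⟦X⟧)) := by
  induction n with
  | zero => simp
  | succ n ih =>
    set σ := φ (x.right ^ n)
    have hleft (z : Semidirect φ) (hz : z.right = x.right) :
        ((z ^ (n + 1)).left : R⟦X⟧) = (z ^ n).left * autHom R σ z.left := by
      rw [pow_succ, SemidirectProduct.mul_left, right_pow, hz]
      rfl
    have hσ : PowerSeries.X ^ d ∣ (autHom R σ x.left - autHom R σ y.left : R⟦X⟧) := by
      obtain ⟨z, hz⟩ := h
      refine ⟨PowerSeries.map (σ : R →+* R) z, ?_⟩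
      have := congrArg (PowerSeries.map (σ : R →+* R)) hz
      rwa [map_sub, map_mul, map_pow, PowerSeries.map_X] at this
    have hδ : PowerSeries.coeff d (autHom R σ x.left - autHom R σ y.left : R⟦X⟧) =
        σ (PowerSeries.coeff d (x.left - y.left : R⟦X⟧)) := by
      simp only [map_sub, coeff_autHom]
    obtain ⟨hdvd, hcoeff⟩ := X_pow_dvd_mul_sub_mul ih.1 hσ
    rw [hleft x rfl, hleft y hright.symm]
    refine ⟨hdvd, ?_⟩
    rw [hcoeff, constantCoeff_coe, constantCoeff_coe, mul_one, one_mul, ih.2,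
      Finset.sum_range_succ, hδ]

/-- The lowest coefficient `δ` in which two `n`-th roots of the same element differ satisfies
`∑ i < n, gⁱ δ = 0`, where `g` is their common component in `Γ`. -/
theorem isMulTorsionFree [IsMulTorsionFree Γ]
    (hφ : ∀ (g : Γ) (n : ℕ) (r : R), n ≠ 0 → ∑ i ∈ Finset.range n, φ (g ^ i) r = 0 → r = 0) :
    IsMulTorsionFree (Semidirect φ) where
  pow_left_injective n hn x y hxy := by
    change x ^ n = y ^ n at hxy
    have hright : x.right = y.right :=
      pow_left_injective hn (by simpa only [right_pow] using congrArg SemidirectProduct.right hxy)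
    have hleft (d : ℕ) : PowerSeries.coeff d (x.left - y.left : R⟦X⟧) = 0 := by
      induction d using Nat.strong_induction_on with
      | _ d ih =>
        obtain ⟨-, hsum⟩ := X_pow_dvd_pow_left_sub hright (PowerSeries.X_pow_dvd_iff.mpr ih) n
        rw [hxy, sub_self, map_zero] at hsum
        exact hφ _ _ _ hn hsum.symm
    exact SemidirectProduct.ext (Subtype.ext (sub_eq_zero.mp (PowerSeries.ext hleft))) hright

end Semidirect

end principalUnits

end PrincipalUnits

/-! ### Trace algebras -/

noncomputable section TraceAlgebra

variable {α : Type*} (G : SimpleGraph α)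

/-- The integral monoid algebra of the trace monoid of `G`. -/
abbrev TraceAlgebra : Type _ := MonoidAlgebra ℤ (TraceMonoid G)

namespace TraceAlgebra

/-- The letter of the trace algebra given by a vertex. -/
def of (v : α) : TraceAlgebra G := MonoidAlgebra.of ℤ _ (TraceMonoid.of G v)

/-- The action of the automorphisms of the graph on the trace algebra. -/
def autHom : (G ≃g G) →* RingAut (TraceAlgebra G) where
  toFun σ := MonoidAlgebra.mapDomainRingEquiv ℤ (TraceMonoid.autHom G σ)
  map_one' := by
    ext k t
    simp only [map_one, MonoidAlgebra.coeff_mapDomainRingEquiv, Finsupp.equivMapDomain_apply,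
      MulEquiv.coe_toEquiv_symm, RingAut.one_apply]
    rfl
  map_mul' σ τ := by
    ext k t
    simp only [map_mul, MonoidAlgebra.coeff_mapDomainRingEquiv, Finsupp.equivMapDomain_apply,
      MulEquiv.coe_toEquiv_symm, RingAut.mul_apply]
    rfl

variable {G}

lemma commute_of {v w : α} (h : G.Adj v w) : Commute (of G v) (of G w) :=
  (TraceMonoid.commute_of h).map (MonoidAlgebra.of ℤ (TraceMonoid G))

/-- The ring homomorphism given by a map on vertices sending adjacent vertices to commuting
elements. -/
def lift {S : Type*} [Ring S] (f : α → S) (hf : ∀ v w, G.Adj v w → Commute (f v) (f w)) :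
    TraceAlgebra G →+* S :=
  (MonoidAlgebra.lift ℤ S _ (TraceMonoid.lift f hf) : TraceAlgebra G →ₐ[ℤ] S)

@[simp]
lemma lift_of {S : Type*} [Ring S] (f : α → S) (hf : ∀ v w, G.Adj v w → Commute (f v) (f w))
    (v : α) : lift f hf (of G v) = f v :=
  MonoidAlgebra.lift_of _ _

lemma autHom_of (σ : G ≃g G) (v : α) : autHom G σ (of G v) = of G (σ v) :=
  MonoidAlgebra.mapDomainRingEquiv_single _ _ _

lemma coeff_autHom (σ : G ≃g G) (k : TraceAlgebra G) (t : TraceMonoid G) :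
    (autHom G σ k).coeff t = k.coeff ((TraceMonoid.autHom G σ).symm t) := by
  change (MonoidAlgebra.mapDomainRingEquiv ℤ (TraceMonoid.autHom G σ) k).coeff t = _
  rw [MonoidAlgebra.coeff_mapDomainRingEquiv]
  rfl

lemma coeff_autHom_pow (σ : G ≃g G) (i : ℕ) (k : TraceAlgebra G) (t : TraceMonoid G) :
    (autHom G (σ ^ i) k).coeff t = k.coeff ((TraceMonoid.autHom G σ).symm^[i] t) := by
  induction i generalizing k with
  | zero => simp
  | succ i ih =>
    rw [pow_succ, map_mul, RingAut.mul_apply, ih, coeff_autHom, Function.iterate_succ_apply']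

lemma eq_zero_of_sum_autHom_pow_eq_zero {σ : G ≃g G} (h : HasTrivialPeriods σ) {n : ℕ} (hn : n ≠ 0)
    {k : TraceAlgebra G} (hsum : ∑ i ∈ Finset.range n, autHom G (σ ^ i) k = 0) : k = 0 := by
  set τ := TraceMonoid.autHom G σ
  have hτ : HasTrivialPeriods τ.symm :=
    (TraceMonoid.hasTrivialPeriods_autHom h).of_inverse τ.left_inv τ.right_inv
  refine MonoidAlgebra.coeff_injective <| DFunLike.coe_injective <|
    hτ.eq_zero_of_sum_iterate_eq_zero τ.symm.injective k.coeff.hasFiniteSupport hn fun t ↦ ?_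
  have := congrArg (fun k ↦ k.coeff t) hsum
  rwa [MonoidAlgebra.coeff_sum, Finsupp.finsetSum_apply, MonoidAlgebra.coeff_zero,
    Finsupp.zero_apply, Finset.sum_congr rfl fun i _ ↦ coeff_autHom_pow σ i k t] at this

end TraceAlgebra

end TraceAlgebra

/-! ### Products of signed Magnus units -/

noncomputable section MagnusUnits

variable {α : Type*} (G : SimpleGraph α)

open Classical in
/-- The left quotient of a word by a letter `v` of the trace monoid: the result of deleting the
first occurrence of `v`, provided that `v` commutes with all the letters preceding it. -/
def leftQuotient (v : α) : List α → Option (List α)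
  | [] => none
  | u :: l =>
    if u = v then some l
    else if G.Adj v u then (leftQuotient v l).map (u :: ·) else none

variable {G}

@[simp]
lemma leftQuotient_cons_self (v : α) (l : List α) : leftQuotient G v (v :: l) = some l :=
  if_pos rfl

lemma leftQuotient_cons_of_adj {u v : α} (h : G.Adj v u) (l : List α) :
    leftQuotient G v (u :: l) = (leftQuotient G v l).map (u :: ·) := by
  rw [leftQuotient, if_neg h.ne', if_pos h]

lemma leftQuotient_cons_of_not_adj {u v : α} (huv : u ≠ v) (h : ¬G.Adj v u) (l : List α) :
    leftQuotient G v (u :: l) = none := by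
  rw [leftQuotient, if_neg huv, if_neg h]

lemma leftQuotient_bind_comm {v w : α} (h : G.Adj v w) (l : List α) :
    (leftQuotient G v l).bind (leftQuotient G w) =
      (leftQuotient G w l).bind (leftQuotient G v) := by
  induction l with
  | nil => rfl
  | cons u l ih =>
    by_cases huv : u = v
    · subst huv
      simp [leftQuotient_cons_of_adj h.symm, Option.bind_map]
    by_cases huw : u = w
    · subst huw
      simp [leftQuotient_cons_of_adj h, Option.bind_map]
    by_cases hv : G.Adj v u <;> by_cases hw : G.Adj w u
    · simpa [leftQuotient_cons_of_adj, hv, hw, Option.bind_map, Option.map_bind,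
        Function.comp_def] using congrArg (Option.map (u :: ·)) ih
    all_goals simp [leftQuotient_cons_of_adj, leftQuotient_cons_of_not_adj, *, Option.bind_map]

lemma isSome_leftQuotient {v w : α} (h : G.Adj v w) {l l' : List α}
    (hl : leftQuotient G v l = some l') :
    (leftQuotient G w l').isSome = (leftQuotient G w l).isSome := by
  induction l generalizing l' with
  | nil => cases hl
  | cons u l ih =>
    by_cases huv : u = v
    · subst huv
      obtain rfl : l = l' := by simpa using hl
      simp [leftQuotient_cons_of_adj h.symm]
    by_cases hv : G.Adj v u
    · rw [leftQuotient_cons_of_adj hv] at hl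
      obtain ⟨m, hm, rfl⟩ := Option.map_eq_some_iff.mp hl
      by_cases huw : u = w
      · simp [huw]
      by_cases hw : G.Adj w u
      · simpa [leftQuotient_cons_of_adj hw] using ih hm
      · simp [leftQuotient_cons_of_not_adj huw hw]
    · simp [leftQuotient_cons_of_not_adj huv hv] at hl

variable (G) in
/-- The left quotient by `v` if it can be formed exactly once. -/
def exactLeftQuotient (v : α) (l : List α) : Option (List α) :=
  (leftQuotient G v l).filter fun l' ↦ (leftQuotient G v l').isNone

lemma exactLeftQuotient_eq_some_iff {v : α} {l l' : List α} :
    exactLeftQuotient G v l = some l' ↔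
      leftQuotient G v l = some l' ∧ leftQuotient G v l' = none := by
  simp [exactLeftQuotient, Option.filter_eq_some_iff]

lemma exactLeftQuotient_bind_self (v : α) (l : List α) :
    (exactLeftQuotient G v l).bind (exactLeftQuotient G v) = none := by
  simp only [Option.bind_eq_none_iff, exactLeftQuotient_eq_some_iff]
  rintro l' ⟨-, hl'⟩
  simp [exactLeftQuotient, hl']

lemma exactLeftQuotient_bind_comm {v w : α} (h : G.Adj v w) (l : List α) :
    (exactLeftQuotient G v l).bind (exactLeftQuotient G w) =
      (exactLeftQuotient G w l).bind (exactLeftQuotient G v) := by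
  have himp {v w : α} (h : G.Adj v w) (m : List α)
      (hm : (exactLeftQuotient G v l).bind (exactLeftQuotient G w) = some m) :
      (exactLeftQuotient G w l).bind (exactLeftQuotient G v) = some m := by
    simp only [Option.bind_eq_some_iff, exactLeftQuotient_eq_some_iff] at hm ⊢
    obtain ⟨lv, ⟨hlv, hlv'⟩, hm, hm'⟩ := hm
    have hcomm := leftQuotient_bind_comm h l
    rw [hlv, Option.bind_some, hm, eq_comm, Option.bind_eq_some_iff] at hcomm
    obtain ⟨lw, hlw, hmw⟩ := hcomm
    have hw := isSome_leftQuotient h hmw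
    have hv := isSome_leftQuotient h.symm hm
    simp only [hm', hlv', Option.isSome_none] at hw hv
    simp only [Bool.eq_false_iff, ne_eq, Option.not_isSome_iff_eq_none, @eq_comm Bool false]
      at hw hv
    exact ⟨lw, ⟨hlw, hw⟩, hmw, hv⟩
  exact Option.ext fun m ↦ ⟨himp h m, himp h.symm m⟩

/-- The operator `f ↦ f ∘ d` on integer-valued functions attached to a partial map `d`, where
`f (d l)` is read as `0` if `d` is undefined at `l`. -/
def partialPullback {β : Type*} (d : β → Option β) : Module.End ℤ (β → ℤ) where
  toFun f l := (d l).elim 0 f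
  map_add' f g := by ext l; cases h : d l <;> simp [h]
  map_smul' c f := by ext l; cases h : d l <;> simp [h]

lemma partialPullback_mul {β : Type*} (d e : β → Option β) :
    partialPullback d * partialPullback e = partialPullback fun l ↦ (d l).bind e := by
  ext f l : 2
  change (d l).elim 0 (fun l' ↦ (e l').elim 0 f) = ((d l).bind e).elim 0 f
  cases d l <;> rfl

variable (G) in
/-- The operator on functions on words induced by the exact left quotient by `v`. -/
def quotientOp (v : α) : Module.End ℤ (List α → ℤ) := partialPullback (exactLeftQuotient G v)

lemma quotientOp_mul_self (v : α) : quotientOp G v * quotientOp G v = 0 := by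
  simp only [quotientOp, partialPullback_mul, exactLeftQuotient_bind_self]
  rfl

lemma commute_quotientOp {v w : α} (h : G.Adj v w) : Commute (quotientOp G v) (quotientOp G w) := by
  simp only [Commute, SemiconjBy, quotientOp, partialPullback_mul, exactLeftQuotient_bind_comm h]

lemma quotientOp_apply_cons {v : α} {l : List α} (h : leftQuotient G v l = none)
    (f : List α → ℤ) : quotientOp G v f (v :: l) = f l := by
  have hv : exactLeftQuotient G v (v :: l) = some l :=
    exactLeftQuotient_eq_some_iff.mpr ⟨leftQuotient_cons_self v l, h⟩
  change (exactLeftQuotient G v (v :: l)).elim 0 f = f l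
  rw [hv, Option.elim_some]

variable (G) in
/-- A word is reduced if for none of its suffixes `v :: l` the trace of `l` is divisible by `v` on
the left. -/
def IsTraceReduced : List α → Prop
  | [] => True
  | v :: l => leftQuotient G v l = none ∧ IsTraceReduced l

open Classical in
lemma prod_signed_quotientOp_apply_ne_zero {l : List (α × Bool)}
    (hl : IsTraceReduced G (l.map Prod.fst)) :
    (l.map fun p ↦ bif p.2 then quotientOp G p.1 else -quotientOp G p.1).prod
      (Pi.single [] 1) (l.map Prod.fst) ≠ 0 := by
  induction l with
  | nil => simp
  | cons p l ih =>
    obtain ⟨v, b⟩ := p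
    have hcons := quotientOp_apply_cons (show leftQuotient G v (l.map Prod.fst) = none from hl.1)
    cases b <;> simpa [hcons] using ih hl.2

variable (G) in
/-- The Magnus unit `1 + v X` of a vertex `v` if `b` is true, and its inverse otherwise. -/
def magnusUnit (v : α) (b : Bool) : principalUnits (TraceAlgebra G) :=
  bif b then principalUnits.oneAddMulX (.of G v) else (principalUnits.oneAddMulX (.of G v))⁻¹

lemma magnusUnit_not (v : α) (b : Bool) : magnusUnit G v (!b) = (magnusUnit G v b)⁻¹ := by
  cases b <;> simp [magnusUnit]

lemma commute_magnusUnit {v w : α} (h : G.Adj v w) (b c : Bool) :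
    Commute (magnusUnit G v b) (magnusUnit G w c) := by
  have := principalUnits.commute_oneAddMulX (TraceAlgebra.commute_of h)
  cases b <;> cases c <;> simpa [magnusUnit] using this

lemma autHom_magnusUnit (σ : G ≃g G) (v : α) (b : Bool) :
    principalUnits.autHom _ (TraceAlgebra.autHom G σ) (magnusUnit G v b) =
      magnusUnit G (σ v) b := by
  have : principalUnits.autHom _ (TraceAlgebra.autHom G σ)
      (principalUnits.oneAddMulX (.of G v)) = principalUnits.oneAddMulX (.of G (σ v)) :=
    (principalUnits.map_oneAddMulX _ _).trans (congrArg _ (TraceAlgebra.autHom_of σ v))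
  cases b <;> simp [magnusUnit, this]

lemma map_lift_quotientOp_magnusUnit (v : α) (b : Bool) :
    principalUnits.map (TraceAlgebra.lift (quotientOp G) fun _ _ ↦ commute_quotientOp)
        (magnusUnit G v b) =
      principalUnits.oneAddMulX (bif b then quotientOp G v else -quotientOp G v) := by
  cases b <;> simp [magnusUnit, principalUnits.map_oneAddMulX, principalUnits.inv_oneAddMulX,
    quotientOp_mul_self]

theorem prod_magnusUnit_ne_one {l : List (α × Bool)} (hne : l ≠ [])
    (hl : IsTraceReduced G (l.map Prod.fst)) : (l.map fun p ↦ magnusUnit G p.1 p.2).prod ≠ 1 := by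
  classical
  intro h
  set op := fun p : α × Bool ↦ bif p.2 then quotientOp G p.1 else -quotientOp G p.1
  have hop : ((l.map op).map principalUnits.oneAddMulX).prod = 1 := by
    have := congrArg (principalUnits.map
      (TraceAlgebra.lift (quotientOp G) fun _ _ ↦ commute_quotientOp)) h
    simpa only [map_list_prod, List.map_map, Function.comp_def, map_lift_quotientOp_magnusUnit,
      map_one] using this
  have hprod := (principalUnits.coeff_prod_map_oneAddMulX (l.map op)).2
  rw [hop, OneMemClass.coe_one, PowerSeries.coeff_one, List.length_map,
    if_neg (List.length_pos_of_ne_nil hne).ne'] at hprod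
  exact prod_signed_quotientOp_apply_ne_zero hl (by rw [← hprod]; rfl)

end MagnusUnits

/-! ### Germ-linear order automorphisms of the line -/

section GermLinear

open Filter Topology

lemma forall_of_eventually_atBot_of_forall_eventually_nhdsGE {α : Type*}
    [ConditionallyCompleteLinearOrder α] [TopologicalSpace α] [OrderTopology α] [NoMaxOrder α]
    {p : α → Prop} (hbot : ∀ᶠ t in atBot, p t)
    (h : ∀ a, (∀ t < a, p t) → ∀ᶠ t in 𝓝[≥] a, p t) (t : α) : p t := by
  by_contra ht
  have : Nonempty α := ⟨t⟩
  obtain ⟨b, hb⟩ := eventually_atBot.mp hbot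
  have hbdd : BddBelow {s | ¬p s} := ⟨b, fun s hs ↦ (lt_of_not_ge fun hsb ↦ hs (hb s hsb)).le⟩
  have hlt : ∀ s < sInf {s | ¬p s}, p s := fun s hs ↦
    not_not.mp fun hps ↦ (csInf_le hbdd hps).not_gt hs
  obtain ⟨u, hu, hsub⟩ := mem_nhdsGE_iff_exists_Ico_subset.mp (h _ hlt)
  refine hu.not_ge (le_csInf ⟨t, ht⟩ fun s hs ↦ le_of_not_gt fun hsu ↦ hs ?_)
  exact (lt_or_ge s _).elim (hlt s) fun hle ↦ hsub ⟨hle, hsu⟩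

/-- The function `f` has right slope `m` at `a` if it is affine of slope `m` on some interval
`[a, a + ε)`. -/
def HasRightSlope (f : ℝ → ℝ) (m a : ℝ) : Prop :=
  ∀ᶠ t in 𝓝[≥] a, f t = f a + m * (t - a)

lemma hasRightSlope_id (a : ℝ) : HasRightSlope id 1 a := .of_forall fun t ↦ by simp

namespace HasRightSlope

variable {f g : ℝ → ℝ} {m m' a : ℝ}

lemma unique (h : HasRightSlope f m a) (h' : HasRightSlope f m' a) : m = m' := by
  have hright : ∀ᶠ t in 𝓝[>] a, f t = f a + m * (t - a) ∧ f t = f a + m' * (t - a) :=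
    nhdsWithin_mono a Set.Ioi_subset_Ici_self (h.and h')
  obtain ⟨t, ⟨ht, ht'⟩, hat⟩ := (hright.and self_mem_nhdsWithin).exists
  exact mul_right_cancel₀ (sub_pos.mpr hat).ne' (add_left_cancel (ht.symm.trans ht'))

lemma comp (hf : HasRightSlope f m' (g a)) (hg : HasRightSlope g m a)
    (hlim : Tendsto g (𝓝[≥] a) (𝓝[≥] (g a))) : HasRightSlope (f ∘ g) (m' * m) a := by
  filter_upwards [hg, hlim.eventually hf] with t hgt hft
  rw [Function.comp_apply, Function.comp_apply, hft, hgt]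
  ring

lemma iterate (h : HasRightSlope f m a) (ha : f a = a) (hlim : Tendsto f (𝓝[≥] a) (𝓝[≥] a))
    (n : ℕ) : HasRightSlope f^[n] (m ^ n) a := by
  induction n with
  | zero => simpa using hasRightSlope_id a
  | succ n ih => exact HasRightSlope.comp (ha.symm ▸ ih) h (by rwa [ha])

end HasRightSlope

lemma tendsto_orderIso_nhdsGE {α : Type*} [LinearOrder α] [TopologicalSpace α] [OrderTopology α]
    (f : α ≃o α) (a : α) : Tendsto f (𝓝[≥] a) (𝓝[≥] (f a)) :=
  f.continuous.continuousWithinAt.tendsto_nhdsWithin fun _ ht ↦ f.monotone ht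

lemma HasRightSlope.inv {f : ℝ ≃o ℝ} {m b : ℝ} (h : HasRightSlope f m (f⁻¹ b)) (hm : m ≠ 0) :
    HasRightSlope (f⁻¹ : ℝ ≃o ℝ) m⁻¹ b := by
  filter_upwards [(tendsto_orderIso_nhdsGE f⁻¹ b).eventually h] with t ht
  rw [RelIso.apply_inv_self, RelIso.apply_inv_self] at ht
  rw [sub_eq_of_eq_add' ht, inv_mul_cancel_left₀ hm]
  ring

/-- The group of order automorphisms of `ℝ` that are the identity near `-∞` and have a positive
right slope at each point. -/
def germLinearGroup : Subgroup (ℝ ≃o ℝ) where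
  carrier := {f | (∀ᶠ t in atBot, f t = t) ∧ ∀ a, ∃ m > 0, HasRightSlope f m a}
  one_mem' := ⟨.of_forall fun _ ↦ rfl, fun a ↦ ⟨1, one_pos, hasRightSlope_id a⟩⟩
  mul_mem' {f g} hf hg := by
    refine ⟨?_, fun a ↦ ?_⟩
    · filter_upwards [hf.1, hg.1] with t hft hgt
      rw [RelIso.mul_apply, hgt, hft]
    · obtain ⟨m, hm, hg⟩ := hg.2 a
      obtain ⟨m', hm', hf⟩ := hf.2 (g a)
      exact ⟨m' * m, mul_pos hm' hm, hf.comp hg (tendsto_orderIso_nhdsGE g a)⟩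
  inv_mem' {f} hf := by
    refine ⟨?_, fun b ↦ ?_⟩
    · filter_upwards [hf.1] with t ht
      nth_rw 1 [← ht, RelIso.inv_apply_self]
    · obtain ⟨m, hm, hf⟩ := hf.2 (f⁻¹ b)
      exact ⟨m⁻¹, inv_pos.mpr hm, hf.inv hm.ne'⟩

lemma eventually_eq_of_commute_of_apply_lt {α : Type*} [LinearOrder α] [TopologicalSpace α]
    [OrderTopology α] {f g k : α ≃o α} {a : α} (hf : Commute f k) (hg : Commute g k)
    (hlt : ∀ t < a, f t = g t) (ha : k a < a) : ∀ᶠ t in 𝓝 a, f t = g t := by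
  filter_upwards [k.continuous.continuousAt.eventually_lt continuousAt_const ha] with t ht
  apply k.injective
  rw [← RelIso.mul_apply, ← RelIso.mul_apply, ← hf.eq, ← hg.eq]
  exact hlt _ ht

lemma coe_relIso_pow {α : Type*} {r : α → α → Prop} (f : r ≃r r) (n : ℕ) : ⇑(f ^ n) = f^[n] :=
  hom_coe_pow _ rfl (fun _ _ ↦ rfl) f n

lemma orderIso_apply_eq_of_pow_apply_eq {α : Type*} [LinearOrder α] {f : α ≃o α} {n : ℕ}
    (hn : n ≠ 0) {a : α} (h : (f ^ n) a = a) : f a = a :=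
  ((Function.Commute.id_right (f := f)).iterate_pos_eq_iff_map_eq f.monotone strictMono_id
    (Nat.pos_of_ne_zero hn)).mp (by rwa [← coe_relIso_pow, Function.iterate_id])

lemma eventually_nhdsGE_eq_of_pow_eq {f g : ℝ ≃o ℝ} (hf : f ∈ germLinearGroup)
    (hg : g ∈ germLinearGroup) {n : ℕ} (hn : n ≠ 0) (h : f ^ n = g ^ n) {a : ℝ}
    (ha : (f ^ n) a = a) : ∀ᶠ t in 𝓝[≥] a, f t = g t := by
  obtain ⟨m, hm, hfm⟩ := hf.2 a
  obtain ⟨m', hm', hgm⟩ := hg.2 a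
  have hfa : f a = a := orderIso_apply_eq_of_pow_apply_eq hn ha
  have hga : g a = a := orderIso_apply_eq_of_pow_apply_eq hn (h ▸ ha)
  have hfn := hfm.iterate hfa (by simpa only [hfa] using tendsto_orderIso_nhdsGE f a) n
  have hgn := hgm.iterate hga (by simpa only [hga] using tendsto_orderIso_nhdsGE g a) n
  rw [← coe_relIso_pow] at hfn hgn
  obtain rfl : m = m' := (pow_left_inj₀ hm.le hm'.le hn).mp (hfn.unique (h ▸ hgn))
  filter_upwards [hfm, hgm] with t hft hgt
  rw [hft, hgt, hfa, hga]

/-- Where two `n`-th roots of `k` first separate, either `k` moves the point, and commuting with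
`k` propagates their agreement, or both roots fix it, and their right slopes agree. -/
instance : IsMulTorsionFree germLinearGroup where
  pow_left_injective n hn := by
    rintro ⟨f, hf⟩ ⟨g, hg⟩ hfg
    have h : f ^ n = g ^ n := congrArg Subtype.val hfg
    refine Subtype.ext <| RelIso.ext <| forall_of_eventually_atBot_of_forall_eventually_nhdsGE
      ((hf.1.and hg.1).mono fun t ht ↦ ht.1.trans ht.2.symm) fun a hlt ↦ ?_
    have hfk : Commute f (f ^ n) := .self_pow f n
    have hgk : Commute g (f ^ n) := h ▸ .self_pow g n
    rcases lt_trichotomy ((f ^ n) a) a with hka | hka | hka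
    · exact nhdsWithin_le_nhds (eventually_eq_of_commute_of_apply_lt hfk hgk hlt hka)
    · exact eventually_nhdsGE_eq_of_pow_eq hf hg hn h hka
    · refine nhdsWithin_le_nhds
        (eventually_eq_of_commute_of_apply_lt hfk.inv_right hgk.inv_right hlt ?_)
      rwa [← (f ^ n).lt_iff_lt, RelIso.apply_inv_self]

end GermLinear

/-! ### Charts and stretches -/

noncomputable section Stretches

open Set Filter Topology

lemma pnat_cast_pos (ℓ : ℕ+) : (0 : ℝ) < ℓ := Nat.cast_pos.mpr ℓ.pos

/-- The coordinate function of the interval `[a, a + ℓ]`: the nondecreasing piecewise linear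
function that increases from `0` to `1` on this interval and is constant on either side of it. -/
def chart (a : ℝ) (ℓ : ℕ+) : ℝ →o ℝ where
  toFun t := max 0 (min 1 ((t - a) / ℓ))
  monotone' _ _ h :=
    max_le_max_left 0 (min_le_min_left 1
      (div_le_div_of_nonneg_right (sub_le_sub_right h a) (pnat_cast_pos ℓ).le))

/-- The piecewise linear map that stretches the interval `[a, a + ℓ]` to `[a, a + ℓ']`, fixes the
points to its left and translates the points to its right. -/
def stretchHom (a : ℝ) (ℓ ℓ' : ℕ+) : ℝ →o ℝ where
  toFun t := min t a + ℓ' * chart a ℓ t + max 0 (t - (a + ℓ))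
  monotone' s t h := by
    have := (chart a ℓ).monotone h
    dsimp only
    gcongr

variable {a c t : ℝ} {ℓ ℓ' m m' : ℕ+}

lemma chart_apply : chart a ℓ t = max 0 (min 1 ((t - a) / ℓ)) := rfl

lemma chart_of_le (h : t ≤ a) : chart a ℓ t = 0 :=
  max_eq_left ((min_le_right _ _).trans
    (div_nonpos_of_nonpos_of_nonneg (sub_nonpos.mpr h) (Nat.cast_nonneg _)))

lemma chart_of_ge (h : a + ℓ ≤ t) : chart a ℓ t = 1 := by
  have : 1 ≤ (t - a) / ℓ := (one_le_div (pnat_cast_pos ℓ)).mpr (le_sub_iff_add_le'.mpr h)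
  simp [chart_apply, this]

lemma chart_of_mem (h : t ∈ Icc a (a + ℓ)) : chart a ℓ t = (t - a) / ℓ := by
  have h0 : 0 ≤ (t - a) / ℓ := div_nonneg (sub_nonneg.mpr h.1) (Nat.cast_nonneg _)
  have h1 : (t - a) / ℓ ≤ 1 := (div_le_one (pnat_cast_pos ℓ)).mpr (sub_le_iff_le_add'.mpr h.2)
  simp [chart_apply, h0, h1]

lemma stretchHom_apply :
    stretchHom a ℓ ℓ' t = min t a + ℓ' * chart a ℓ t + max 0 (t - (a + ℓ)) := rfl

lemma stretchHom_of_le (h : t ≤ a) : stretchHom a ℓ ℓ' t = t := by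
  have : t ≤ a + ℓ := h.trans (le_add_of_nonneg_right (pnat_cast_pos ℓ).le)
  simp [stretchHom_apply, chart_of_le h, h, this]

lemma stretchHom_of_mem (h : t ∈ Icc a (a + ℓ)) :
    stretchHom a ℓ ℓ' t = a + ℓ' * ((t - a) / ℓ) := by
  simp [stretchHom_apply, chart_of_mem h, h.1, h.2]

lemma stretchHom_of_ge (h : a + ℓ ≤ t) : stretchHom a ℓ ℓ' t = t + (ℓ' - ℓ) := by
  have : a ≤ t := (le_add_of_nonneg_right (pnat_cast_pos ℓ).le).trans h
  rw [stretchHom_apply, chart_of_ge h, min_eq_right this, max_eq_right (sub_nonneg.mpr h)]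
  ring

lemma stretchHom_mem (h : t ∈ Icc a (a + ℓ)) : stretchHom a ℓ ℓ' t ∈ Icc a (a + ℓ') := by
  have ha : stretchHom a ℓ ℓ' a = a := stretchHom_of_le le_rfl
  have hb : stretchHom a ℓ ℓ' (a + ℓ) = a + ℓ' := by rw [stretchHom_of_ge le_rfl]; ring
  exact ⟨ha.ge.trans ((stretchHom a ℓ ℓ').monotone h.1),
    ((stretchHom a ℓ ℓ').monotone h.2).trans_eq hb⟩

lemma chart_stretchHom (t : ℝ) : chart a ℓ' (stretchHom a ℓ ℓ' t) = chart a ℓ t := by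
  rcases le_total t a with h | h
  · rw [stretchHom_of_le h, chart_of_le h, chart_of_le h]
  rcases le_total (a + ℓ) t with h' | h'
  · rw [stretchHom_of_ge h', chart_of_ge h', chart_of_ge (by linarith)]
  · rw [chart_of_mem (stretchHom_mem ⟨h, h'⟩), stretchHom_of_mem ⟨h, h'⟩, chart_of_mem ⟨h, h'⟩,
      add_sub_cancel_left, mul_div_cancel_left₀ _ (pnat_cast_pos ℓ').ne']

lemma stretchHom_stretchHom (t : ℝ) : stretchHom a ℓ' ℓ (stretchHom a ℓ ℓ' t) = t := by
  rcases le_total t a with h | h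
  · rw [stretchHom_of_le h, stretchHom_of_le h]
  rcases le_total (a + ℓ) t with h' | h'
  · rw [stretchHom_of_ge h', stretchHom_of_ge (by linarith)]
    ring
  · rw [stretchHom_of_mem (stretchHom_mem ⟨h, h'⟩), stretchHom_of_mem ⟨h, h'⟩, add_sub_cancel_left,
      mul_div_cancel_left₀ _ (pnat_cast_pos ℓ').ne', mul_div_cancel₀ _ (pnat_cast_pos ℓ).ne',
      add_sub_cancel]

lemma chart_add_right (d : ℝ) : chart (a + d) ℓ (t + d) = chart a ℓ t := by
  rw [chart_apply, chart_apply, add_sub_add_right_eq_sub]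

lemma stretchHom_add_right (d : ℝ) :
    stretchHom (a + d) ℓ ℓ' (t + d) = stretchHom a ℓ ℓ' t + d := by
  simp only [stretchHom_apply, chart_add_right, min_add_add_right, add_right_comm a d,
    add_sub_add_right_eq_sub]
  ring

lemma chart_stretchHom_of_add_le (h : a + ℓ ≤ c) (t : ℝ) :
    chart a ℓ (stretchHom c m m' t) = chart a ℓ t := by
  rcases le_total t c with ht | ht
  · rw [stretchHom_of_le ht]
  · have : c ≤ stretchHom c m m' t :=
      (stretchHom_of_le le_rfl).ge.trans ((stretchHom c m m').monotone ht)
    rw [chart_of_ge (h.trans this), chart_of_ge (h.trans ht)]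

lemma stretchHom_le_of_add_le (h : a + ℓ ≤ c) (ht : t ≤ a + ℓ) :
    stretchHom a ℓ ℓ' t ≤ c + (ℓ' - ℓ) := by
  grw [ht, stretchHom_of_ge le_rfl, h]

lemma chart_add_stretchHom (h : a + ℓ ≤ c) (t : ℝ) :
    chart (c + (ℓ' - ℓ)) m (stretchHom a ℓ ℓ' t) = chart c m t := by
  rcases le_total t (a + ℓ) with ht | ht
  · rw [chart_of_le (stretchHom_le_of_add_le h ht), chart_of_le (ht.trans h)]
  · rw [stretchHom_of_ge ht, chart_add_right]

lemma stretchHom_add_stretchHom (h : a + ℓ ≤ c) (t : ℝ) :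
    stretchHom (c + (ℓ' - ℓ)) m m' (stretchHom a ℓ ℓ' t) =
      stretchHom a ℓ ℓ' (stretchHom c m m' t) := by
  rcases le_total t (a + ℓ) with ht | ht
  · rw [stretchHom_of_le (stretchHom_le_of_add_le h ht), stretchHom_of_le (ht.trans h)]
  · have : a + ℓ ≤ stretchHom c m m' t :=
      (stretchHom_of_le h).ge.trans ((stretchHom c m m').monotone ht)
    rw [stretchHom_of_ge ht, stretchHom_add_right, stretchHom_of_ge this]

/-- The stretch from `[a, a + ℓ]` to `[a, a + ℓ']` as an order automorphism of the line. -/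
def stretch (a : ℝ) (ℓ ℓ' : ℕ+) : ℝ ≃o ℝ :=
  Equiv.toOrderIso ⟨stretchHom a ℓ ℓ', stretchHom a ℓ' ℓ, stretchHom_stretchHom,
    stretchHom_stretchHom⟩ (stretchHom a ℓ ℓ').monotone (stretchHom a ℓ' ℓ).monotone

lemma stretch_mul_stretch (h : a + ℓ ≤ c) :
    stretch (c + (ℓ' - ℓ)) m m' * stretch a ℓ ℓ' = stretch a ℓ ℓ' * stretch c m m' :=
  RelIso.ext (stretchHom_add_stretchHom h)

lemma exists_hasRightSlope_stretchHom (t : ℝ) : ∃ k > 0, HasRightSlope (stretchHom a ℓ ℓ') k t := by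
  rcases lt_or_ge t a with h | h
  · refine ⟨1, one_pos, ?_⟩
    filter_upwards [Ico_mem_nhdsGE h] with s hs
    rw [stretchHom_of_le hs.2.le, stretchHom_of_le h.le]
    ring
  rcases lt_or_ge t (a + ℓ) with h' | h'
  · refine ⟨ℓ' / ℓ, div_pos (pnat_cast_pos ℓ') (pnat_cast_pos ℓ), ?_⟩
    filter_upwards [Ico_mem_nhdsGE h'] with s hs
    rw [stretchHom_of_mem ⟨h.trans hs.1, hs.2.le⟩, stretchHom_of_mem ⟨h, h'.le⟩]
    ring
  · refine ⟨1, one_pos, ?_⟩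
    filter_upwards [self_mem_nhdsWithin] with s hs
    rw [stretchHom_of_ge (h'.trans hs), stretchHom_of_ge h']
    ring

lemma stretch_mem_germLinearGroup : stretch a ℓ ℓ' ∈ germLinearGroup :=
  ⟨(eventually_le_atBot a).mono fun _ ↦ stretchHom_of_le, exists_hasRightSlope_stretchHom⟩

lemma preimage_chart : chart a ℓ ⁻¹' Ioo 0 1 = Ioo a (a + ℓ) := by
  ext t
  rcases le_or_gt t a with h | h
  · simp [chart_of_le h, h.not_gt]
  rcases le_or_gt (a + ℓ) t with h' | h'
  · simp [chart_of_ge h', h'.not_gt]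
  · have : (t - a) / ℓ < 1 := (div_lt_one (pnat_cast_pos ℓ)).mpr (sub_lt_iff_lt_add'.mpr h')
    simp [chart_of_mem ⟨h.le, h'.le⟩, h, h', this, pnat_cast_pos ℓ]

lemma disjoint_preimage_chart : Disjoint (chart a ℓ ⁻¹' Ioo 0 1) (chart c m ⁻¹' Ioo 0 1) ↔
    a + ℓ ≤ c ∨ c + m ≤ a := by
  have := pnat_cast_pos ℓ
  have := pnat_cast_pos m
  rw [preimage_chart, preimage_chart, Ioo_disjoint_Ioo, min_le_iff, le_max_iff, le_max_iff]
  constructor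
  · rintro ((h | h) | (h | h))
    · linarith
    · exact .inl h
    · exact .inr h
    · linarith
  · exact Or.imp .inr .inl

lemma chart_inj : chart a ℓ = chart c m ↔ a = c ∧ ℓ = m := by
  refine ⟨fun h ↦ ?_, by rintro ⟨rfl, rfl⟩; rfl⟩
  have hIoo : Ioo a (a + ℓ) = Ioo c (c + m) := by rw [← preimage_chart, h, preimage_chart]
  have hℓ : a < a + ℓ := lt_add_of_pos_right a (pnat_cast_pos ℓ)
  have hm : c < c + m := lt_add_of_pos_right c (pnat_cast_pos m)
  obtain ⟨hca, hle⟩ := (Ioo_subset_Ioo_iff hℓ).mp hIoo.le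
  obtain ⟨hac, hge⟩ := (Ioo_subset_Ioo_iff hm).mp hIoo.ge
  obtain rfl : a = c := hac.antisymm hca
  exact ⟨rfl, PNat.coe_inj.mp (Nat.cast_injective (R := ℝ) (add_left_cancel (hle.antisymm hge)))⟩

end Stretches

/-! ### The Magnus group of the line -/

noncomputable section MagnusGroup

open Set

variable (ι : Type*)

/-- The commutation graph on letters `(c, r)`, where `c : ℝ →o ℝ` stands for the interval on which
its values lie in `(0, 1)` and `r` is a label: distinct letters commute if their intervals are
disjoint. -/
def letterGraph : SimpleGraph ((ℝ →o ℝ) × ι) where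
  Adj u w := u ≠ w ∧ Disjoint (u.1 ⁻¹' Ioo 0 1) (w.1 ⁻¹' Ioo 0 1)
  symm := ⟨fun _ _ h ↦ ⟨h.1.symm, h.2.symm⟩⟩
  loopless := ⟨fun _ h ↦ h.1 rfl⟩

/-- The action of order automorphisms of the line on letters, by precomposition with the inverse. -/
def letterAut : (ℝ ≃o ℝ) →* (letterGraph ι ≃g letterGraph ι) where
  toFun f :=
    { toFun u := (u.1.comp f.symm, u.2)
      invFun u := (u.1.comp f, u.2)
      left_inv u := by ext <;> simp
      right_inv u := by ext <;> simp
      map_rel_iff' {u w} := by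
        refine and_congr (not_congr ⟨fun h ↦ ?_, fun h ↦ by rw [h]⟩)
          (show Disjoint (f.symm ⁻¹' (u.1 ⁻¹' Ioo 0 1)) (f.symm ⁻¹' (w.1 ⁻¹' Ioo 0 1)) ↔ _ from
            disjoint_preimage_iff f.symm.surjective)
        rw [Equiv.coe_fn_mk, Prod.mk.injEq] at h
        refine Prod.ext (OrderHom.ext _ _ (f.symm.surjective.injective_comp_right ?_)) h.2
        exact congrArg DFunLike.coe h.1 }
  map_one' := rfl
  map_mul' f g := rfl

variable {ι}

lemma letterAut_apply (f : ℝ ≃o ℝ) (u : (ℝ →o ℝ) × ι) :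
    letterAut ι f u = (u.1.comp (f⁻¹ : ℝ ≃o ℝ), u.2) := rfl

lemma hasTrivialPeriods_letterAut (f : ℝ ≃o ℝ) : HasTrivialPeriods (letterAut ι f) := by
  rintro ⟨c, r⟩ ⟨n, hn, h⟩
  have hpow : letterAut ι (f ^ n) (c, r) = (c, r) := by rwa [map_pow, coe_relIso_pow]
  rw [letterAut_apply, ← inv_pow, Prod.mk.injEq] at hpow
  refine Prod.ext (OrderHom.ext _ _ ?_) rfl
  refine comp_eq_self_of_comp_iterate_eq_self c.monotone (f⁻¹).monotone hn.ne' ?_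
  change c ∘ (f⁻¹ : ℝ ≃o ℝ)^[n] = c
  rw [← coe_relIso_pow]
  exact congrArg DFunLike.coe hpow.1

variable (ι) in
/-- The semidirect product of the principal units over the trace algebra of the letters and the
group of germ-linear order automorphisms of the line. -/
abbrev MagnusGroup : Type _ :=
  principalUnits.Semidirect ((TraceAlgebra.autHom (letterGraph ι)).comp
    ((letterAut ι).comp germLinearGroup.subtype))

instance : IsMulTorsionFree (MagnusGroup ι) :=
  principalUnits.Semidirect.isMulTorsionFree fun g n r hn h ↦ by
    refine TraceAlgebra.eq_zero_of_sum_autHom_pow_eq_zero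
      (hasTrivialPeriods_letterAut (g : ℝ ≃o ℝ)) hn ?_
    simpa only [map_pow, MonoidHom.comp_apply, Subgroup.subtype_apply] using h

variable {a c : ℝ} {ℓ ℓ' m m' : ℕ+}

lemma letterGraph_adj_chart {r r' : ι} : (letterGraph ι).Adj (chart a ℓ, r) (chart c m, r') ↔
    a + ℓ ≤ c ∨ c + m ≤ a := by
  refine (and_congr_right fun _ ↦ disjoint_preimage_chart).trans (and_iff_right_of_imp ?_)
  rintro h heq
  obtain ⟨rfl, rfl⟩ := chart_inj.mp (Prod.mk.inj heq).1
  have := pnat_cast_pos ℓ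
  exact h.elim (fun h ↦ by linarith) fun h ↦ by linarith

lemma letterAut_stretch (r : ι) :
    letterAut ι (stretch a ℓ ℓ') (chart a ℓ, r) = (chart a ℓ', r) :=
  Prod.ext (OrderHom.ext _ _ (funext chart_stretchHom)) rfl

lemma letterAut_stretch_of_add_le (h : a + ℓ ≤ c) (r : ι) :
    letterAut ι (stretch c m m') (chart a ℓ, r) = (chart a ℓ, r) :=
  Prod.ext (OrderHom.ext _ _ (funext (chart_stretchHom_of_add_le h))) rfl

lemma letterAut_stretch_add (h : a + ℓ ≤ c) (r : ι) :
    letterAut ι (stretch a ℓ' ℓ) (chart (c + (ℓ' - ℓ)) m, r) = (chart c m, r) :=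
  Prod.ext (OrderHom.ext _ _ (funext (chart_add_stretchHom h))) rfl

/-- The value in the Magnus group of an elementary move at position `a` with label `r` that replaces
an interval of length `ℓ` by one of length `ℓ'`, in the direction `b`. -/
def magnusEdge (b : Bool) (a : ℝ) (ℓ ℓ' : ℕ+) (r : ι) : MagnusGroup ι :=
  ⟨magnusUnit (letterGraph ι) (chart a ℓ, r) b, stretch a ℓ' ℓ, stretch_mem_germLinearGroup⟩

lemma mul_magnusEdge_left (x : MagnusGroup ι) (b : Bool) (r : ι) :
    (x * magnusEdge b a ℓ ℓ' r).left =
      x.left * magnusUnit (letterGraph ι) (letterAut ι x.right (chart a ℓ, r)) b :=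
  congrArg (x.left * ·) (autHom_magnusUnit _ _ b)

lemma magnusEdge_not (b : Bool) (r : ι) :
    magnusEdge (!b) a ℓ' ℓ r = (magnusEdge b a ℓ ℓ' r)⁻¹ := by
  refine eq_inv_of_mul_eq_one_left (SemidirectProduct.ext ?_ (Subtype.ext ?_))
  · rw [mul_magnusEdge_left]
    change magnusUnit _ (chart a ℓ', r) (!b) *
      magnusUnit _ (letterAut ι (stretch a ℓ ℓ') (chart a ℓ, r)) b = 1
    rw [letterAut_stretch, magnusUnit_not, inv_mul_cancel]
  · exact inv_mul_cancel (stretch a ℓ' ℓ)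

lemma magnusEdge_square (h : a + ℓ ≤ c) (b b' : Bool) (r r' : ι) :
    magnusEdge b a ℓ ℓ' r * magnusEdge b' (c + (ℓ' - ℓ)) m m' r' =
      magnusEdge b' c m m' r' * magnusEdge b a ℓ ℓ' r := by
  refine SemidirectProduct.ext ?_ (Subtype.ext (inv_injective (stretch_mul_stretch h)))
  rw [mul_magnusEdge_left, mul_magnusEdge_left]
  change magnusUnit _ (chart a ℓ, r) b * magnusUnit _ (letterAut ι (stretch a ℓ' ℓ) _) b' =
    magnusUnit _ (chart c m, r') b' * magnusUnit _ (letterAut ι (stretch c m' m) _) b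
  rw [letterAut_stretch_of_add_le h, letterAut_stretch_add h]
  exact commute_magnusUnit (letterGraph_adj_chart.mpr (.inl h)) b b'

end MagnusGroup

/-! ### Diagram groups -/

noncomputable section DiagramGroup

/-- A semigroup presentation over the alphabet `α`: the rule `r` identifies the nonempty words
`side r false` and `side r true`, which are assumed to be different. -/
structure SemigroupPresentation (α ι : Type*) where
  side : ι → Bool → List α
  side_ne_nil : ∀ r b, side r b ≠ []
  side_injective : ∀ r, Function.Injective (side r)

/-- A positive edge of the Squier complex of a semigroup presentation, that is, a rule together with
the words to the left and to the right of the place where the rule is applied. -/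
structure SquierEdge (α ι : Type*) where
  left : List α
  rule : ι
  right : List α

/-- An oriented edge of the Squier complex: a positive edge, traversed in its direction if the
Boolean is true and against it otherwise. -/
abbrev SquierStep (α ι : Type*) := SquierEdge α ι × Bool

namespace SemigroupPresentation

variable {α ι : Type*} (P : SemigroupPresentation α ι)

/-- The length of a side of a rule. -/
def sideLength (r : ι) (b : Bool) : ℕ+ :=
  ⟨(P.side r b).length, List.length_pos_of_ne_nil (P.side_ne_nil r b)⟩

lemma length_add_sideLength_le (p k : List α) (r : ι) (b : Bool) :
    (p.length + P.sideLength r b : ℝ) ≤ (p ++ P.side r b ++ k).length := by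
  simp [sideLength]

lemma length_append_side_append (p k : List α) (r : ι) (b c : Bool) :
    ((p ++ P.side r b ++ k).length : ℝ) =
      (p ++ P.side r c ++ k).length + (P.sideLength r b - P.sideLength r c) := by
  simp only [sideLength, PNat.mk_coe, List.length_append, Nat.cast_add]
  ring

/-- The endpoint of an edge of the Squier complex on the given side of its rule. -/
def vertex (e : SquierEdge α ι) (b : Bool) : List α := e.left ++ P.side e.rule b ++ e.right

/-- The defining relators of the Squier group. They express that the squares of the Squier complex,
which consist of two applications of rules at disjoint places, commute. -/
def squareRelators : Set (FreeGroup (SquierEdge α ι)) :=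
  {g | ∃ p r k s q, g = .of ⟨p, r, k ++ P.side s false ++ q⟩ * .of ⟨p ++ P.side r true ++ k, s, q⟩ *
    (.of ⟨p ++ P.side r false ++ k, s, q⟩ * .of ⟨p, r, k ++ P.side s true ++ q⟩)⁻¹}

/-- The Squier group: it has a generator for each edge and a relation for each square of the Squier
complex, so that it receives the fundamental groupoid of the complex. -/
abbrev SquierGroup : Type _ := PresentedGroup P.squareRelators

/-- An edge of the Squier complex as an element of the Squier group. -/
def edge (e : SquierEdge α ι) : P.SquierGroup := PresentedGroup.of e

lemma edge_square (p k q : List α) (r s : ι) :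
    P.edge ⟨p, r, k ++ P.side s false ++ q⟩ * P.edge ⟨p ++ P.side r true ++ k, s, q⟩ =
      P.edge ⟨p ++ P.side r false ++ k, s, q⟩ * P.edge ⟨p, r, k ++ P.side s true ++ q⟩ :=
  mul_inv_eq_one.mp (PresentedGroup.one_of_mem ⟨p, r, k, s, q, rfl⟩)

variable {P} in
/-- The homomorphism from the Squier group given by a labelling of the edges for which the squares
commute. -/
def lift {H : Type*} [Group H] (v : SquierEdge α ι → H)
    (hv : ∀ p k q r s, v ⟨p, r, k ++ P.side s false ++ q⟩ * v ⟨p ++ P.side r true ++ k, s, q⟩ =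
      v ⟨p ++ P.side r false ++ k, s, q⟩ * v ⟨p, r, k ++ P.side s true ++ q⟩) :
    P.SquierGroup →* H :=
  PresentedGroup.toGroup (f := v) <| by
    rintro _ ⟨p, r, k, s, q, rfl⟩
    simpa [mul_inv_eq_one, -mul_inv_rev] using hv p k q r s

variable {P} in
lemma lift_edge {H : Type*} [Group H] (v : SquierEdge α ι → H) (hv) (e : SquierEdge α ι) :
    lift (P := P) v hv (P.edge e) = v e := PresentedGroup.toGroup.of _

/-- An oriented edge of the Squier complex as an element of the Squier group. -/
def step (s : SquierStep α ι) : P.SquierGroup := bif s.2 then P.edge s.1 else (P.edge s.1)⁻¹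

lemma step_not (e : SquierEdge α ι) (b : Bool) : P.step (e, !b) = (P.step (e, b))⁻¹ := by
  cases b <;> simp [step]

lemma step_square (p k q : List α) (r s : ι) (b c : Bool) :
    P.step (⟨p, r, k ++ P.side s (!c) ++ q⟩, b) * P.step (⟨p ++ P.side r b ++ k, s, q⟩, c) =
      P.step (⟨p ++ P.side r (!b) ++ k, s, q⟩, c) * P.step (⟨p, r, k ++ P.side s c ++ q⟩, b) := by
  have h := P.edge_square p k q r s
  cases b <;> cases c <;> simp only [step, cond_true, cond_false, Bool.not_true, Bool.not_false]
  · rw [← mul_inv_rev, ← mul_inv_rev, h]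
  · rw [inv_mul_eq_iff_eq_mul, ← mul_assoc, eq_mul_inv_iff_mul_eq, h]
  · rw [mul_inv_eq_iff_eq_mul, mul_assoc, eq_inv_mul_iff_mul_eq, h]
  · exact h

/-- The list `L` of oriented edges is a path from the vertex `w` to the vertex `w'` of the Squier
complex. -/
def IsPath : List α → List (SquierStep α ι) → List α → Prop
  | w, [], w' => w = w'
  | w, s :: L, w' => P.vertex s.1 (!s.2) = w ∧ IsPath (P.vertex s.1 s.2) L w'

/-- The element of the Squier group represented by a path. -/
def pathValue (L : List (SquierStep α ι)) : P.SquierGroup := (L.map P.step).prod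

lemma pathValue_cons (s : SquierStep α ι) (L : List (SquierStep α ι)) :
    P.pathValue (s :: L) = P.step s * P.pathValue L := by simp [pathValue]

/-- The element `g` of the Squier group is represented by a path from `w` to `w'`, in other words,
by a diagram with top label `w` and bottom label `w'`. -/
def IsDiagram (w w' : List α) (g : P.SquierGroup) : Prop :=
  ∃ L, P.IsPath w L w' ∧ P.pathValue L = g

variable {P} {w w' w'' : List α}

namespace IsDiagram

lemma one (w : List α) : P.IsDiagram w w 1 := ⟨[], rfl, rfl⟩

lemma step_mul {s : SquierStep α ι} {g : P.SquierGroup}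
    (h : P.IsDiagram (P.vertex s.1 s.2) w' g) :
    P.IsDiagram (P.vertex s.1 (!s.2)) w' (P.step s * g) := by
  obtain ⟨L, hL, rfl⟩ := h
  exact ⟨s :: L, ⟨rfl, hL⟩, P.pathValue_cons s L⟩

lemma step (s : SquierStep α ι) : P.IsDiagram (P.vertex s.1 (!s.2)) (P.vertex s.1 s.2) (P.step s) :=
  mul_one (P.step s) ▸ (one _).step_mul

lemma mul {g h : P.SquierGroup} (hg : P.IsDiagram w w' g) (hh : P.IsDiagram w' w'' h) :
    P.IsDiagram w w'' (g * h) := by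
  obtain ⟨L, hL, rfl⟩ := hg
  induction L generalizing w with
  | nil => exact (one_mul h).symm ▸ hL.symm ▸ hh
  | cons s L ih =>
    rw [pathValue_cons, mul_assoc, ← hL.1]
    exact (ih hL.2).step_mul

lemma inv {g : P.SquierGroup} (hg : P.IsDiagram w w' g) : P.IsDiagram w' w g⁻¹ := by
  obtain ⟨L, hL, rfl⟩ := hg
  induction L generalizing w with
  | nil => exact (inv_one (G := P.SquierGroup)).symm ▸ hL.symm ▸ one w'
  | cons s L ih =>
    obtain ⟨rfl, hL⟩ := hL
    rw [pathValue_cons, mul_inv_rev, ← P.step_not]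
    have := IsDiagram.step (P := P) (s.1, !s.2)
    rw [Bool.not_not] at this
    exact (ih hL).mul this

end IsDiagram

variable (P) in
/-- The diagram group of `P` with base `w`, that is, the fundamental group of the Squier complex at
the vertex `w`, realized inside the Squier group. -/
def diagramGroup (w : List α) : Subgroup P.SquierGroup where
  carrier := {g | P.IsDiagram w w g}
  one_mem' := IsDiagram.one w
  mul_mem' hg hh := hg.mul hh
  inv_mem' hg := hg.inv

/-! ### The Magnus embedding of diagram groups -/

variable (P)

/-- The homomorphism to the Magnus group that sends an edge to the move performed by its rule, the
letters of a word being regarded as unit intervals that tile a part of the line from `0` on. -/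
def magnusHom : P.SquierGroup →* MagnusGroup ι :=
  lift (fun e ↦ magnusEdge true e.left.length (P.sideLength e.rule false)
    (P.sideLength e.rule true) e.rule) fun p k q r s ↦ by
      simp only [P.length_append_side_append p k r true false]
      exact magnusEdge_square (P.length_add_sideLength_le p k r false) true true r s

lemma magnusHom_step (e : SquierEdge α ι) (b : Bool) :
    P.magnusHom (P.step (e, b)) =
      magnusEdge b e.left.length (P.sideLength e.rule (!b)) (P.sideLength e.rule b) e.rule := by
  have h : P.magnusHom (P.edge e) = _ := lift_edge _ _ e
  cases b
  · exact (map_inv P.magnusHom _).trans ((congrArg _ h).trans (magnusEdge_not true _).symm)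
  · exact h

/-- The action of the Squier group on letters, through its map to the automorphisms of the line. -/
def letterAction : P.SquierGroup →* (letterGraph ι ≃g letterGraph ι) :=
  (letterAut ι).comp ((germLinearGroup.subtype.comp SemidirectProduct.rightHom).comp P.magnusHom)

/-- The letter marking the place of a side of the rule in an endpoint of an edge. -/
def letter (e : SquierEdge α ι) (b : Bool) : (ℝ →o ℝ) × ι :=
  (chart e.left.length (P.sideLength e.rule b), e.rule)

lemma letterAction_step (e : SquierEdge α ι) (b : Bool) :
    P.letterAction (P.step (e, b)) = letterAut ι
      (stretch e.left.length (P.sideLength e.rule b) (P.sideLength e.rule (!b))) := by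
  simp only [letterAction, MonoidHom.comp_apply, magnusHom_step]
  rfl

lemma letterAction_step_letter (e : SquierEdge α ι) (b : Bool) :
    P.letterAction (P.step (e, b)) (P.letter e b) = P.letter e (!b) := by
  rw [letterAction_step]
  exact letterAut_stretch e.rule

/-- The signed letters contributed by the steps of a path to its image in the Magnus group, when the
path is preceded by an element acting on letters by `f`. -/
def pathLetters : (letterGraph ι ≃g letterGraph ι) → List (SquierStep α ι) →
    List (((ℝ →o ℝ) × ι) × Bool)
  | _, [] => []
  | f, s :: L => (f (P.letter s.1 (!s.2)), s.2) :: pathLetters (f * P.letterAction (P.step s)) L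

lemma left_magnusHom_mul_pathValue (g : P.SquierGroup) (L : List (SquierStep α ι)) :
    (P.magnusHom (g * P.pathValue L)).left = (P.magnusHom g).left *
      ((P.pathLetters (P.letterAction g) L).map
        fun u ↦ magnusUnit (letterGraph ι) u.1 u.2).prod := by
  induction L generalizing g with
  | nil => simp [pathValue, pathLetters]
  | cons s L ih =>
    rw [pathValue_cons, ← mul_assoc, ih, map_mul, magnusHom_step, mul_magnusEdge_left, mul_assoc,
      map_mul, pathLetters, List.map_cons, List.prod_cons]
    rfl

variable {P}

lemma append_split {p u q p' u' q' : List α} (h : p ++ u ++ q = p' ++ u' ++ q')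
    (hlen : p.length + u.length ≤ p'.length) : ∃ k, p' = p ++ u ++ k ∧ q = k ++ u' ++ q' := by
  rw [← List.length_append] at hlen
  rw [List.append_assoc p'] at h
  obtain ⟨k, rfl⟩ := List.prefix_of_prefix_length_le ⟨q, h⟩ (List.prefix_append _ _) hlen
  exact ⟨k, rfl, by simpa using h⟩

lemma exists_swap {s t : SquierStep α ι} (h : P.IsPath w [s, t] w')
    (hadj : (letterGraph ι).Adj (P.letter s.1 s.2) (P.letter t.1 (!t.2))) :
    ∃ t' s', P.IsPath w [t', s'] w' ∧ P.step t' * P.step s' = P.step s * P.step t ∧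
      P.letterAction (P.step t') (P.letter s'.1 (!s'.2)) = P.letter s.1 (!s.2) := by
  obtain ⟨⟨p, r, q⟩, b⟩ := s
  obtain ⟨⟨p', r', q'⟩, c⟩ := t
  obtain ⟨rfl, hst, rfl⟩ := h
  simp only [vertex] at hst
  rcases letterGraph_adj_chart.mp hadj with hle | hle
  · obtain ⟨k, rfl, rfl⟩ := append_split hst.symm (mod_cast hle)
    refine ⟨(⟨p ++ P.side r (!b) ++ k, r', q'⟩, c), (⟨p, r, k ++ P.side r' c ++ q'⟩, b),
      by simp [IsPath, vertex], (P.step_square p k q' r r' b c).symm, ?_⟩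
    rw [letterAction_step]
    exact letterAut_stretch_of_add_le (P.length_add_sideLength_le p k r !b) r
  · obtain ⟨k, rfl, rfl⟩ := append_split hst (mod_cast hle)
    refine ⟨(⟨p', r', k ++ P.side r (!b) ++ q⟩, c), (⟨p' ++ P.side r' c ++ k, r, q⟩, b),
      by simp [IsPath, vertex], P.step_square p' k q r' r c b, ?_⟩
    rw [letterAction_step]
    simp only [letter, P.length_append_side_append p' k r' c (!c)]
    exact letterAut_stretch_add (P.length_add_sideLength_le p' k r' !c) r

lemma eq_of_vertex_eq_of_letter_eq {e e' : SquierEdge α ι} {b c : Bool}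
    (hvertex : P.vertex e b = P.vertex e' c) (hletter : P.letter e b = P.letter e' c) :
    e = e' ∧ b = c := by
  obtain ⟨p, r, q⟩ := e
  obtain ⟨p', r', q'⟩ := e'
  simp only [letter, Prod.mk.injEq, chart_inj, Nat.cast_inj] at hletter
  obtain ⟨⟨hpos, hlen⟩, rfl⟩ := hletter
  obtain ⟨hleft, rfl⟩ := List.append_inj hvertex <| by
    rw [List.length_append, List.length_append]
    exact congrArg₂ _ hpos (congrArg PNat.val hlen)
  obtain ⟨rfl, hside⟩ := List.append_inj hleft hpos
  exact ⟨rfl, P.side_injective r hside⟩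

lemma exists_shorter_of_leftQuotient_ne_none {f : letterGraph ι ≃g letterGraph ι}
    {s : SquierStep α ι} {L : List (SquierStep α ι)} (h : P.IsPath w (s :: L) w')
    (hq : leftQuotient (letterGraph ι) (f (P.letter s.1 (!s.2)))
      ((P.pathLetters (f * P.letterAction (P.step s)) L).map Prod.fst) ≠ none) :
    ∃ L', P.IsPath w L' w' ∧ P.pathValue L' = P.pathValue (s :: L) ∧ L'.length < L.length := by
  induction L generalizing s w f with
  | nil => exact absurd rfl hq
  | cons t L ih =>
    obtain ⟨hs, ht, hL⟩ := h
    obtain ⟨F, hF⟩ : ∃ F, f * P.letterAction (P.step s) = F := ⟨_, rfl⟩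
    have hsource : f (P.letter s.1 (!s.2)) = F (P.letter s.1 s.2) := by
      rw [← hF, RelIso.mul_apply, letterAction_step_letter]
    rw [pathLetters, List.map_cons, hsource, hF] at hq
    rcases eq_or_ne (P.letter t.1 (!t.2)) (P.letter s.1 s.2) with heq | hne
    · obtain ⟨he, hb⟩ := eq_of_vertex_eq_of_letter_eq ht heq
      obtain ⟨e, b⟩ := s
      obtain ⟨e', c⟩ := t
      subst he hb hs
      refine ⟨L, by simpa using hL, ?_, Nat.lt_succ_self _⟩
      rw [pathValue_cons, pathValue_cons, step_not, inv_mul_cancel_left]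
    by_cases hadj : (letterGraph ι).Adj (P.letter s.1 s.2) (P.letter t.1 (!t.2))
    · obtain ⟨t', s', ⟨ht', hs', hend⟩, hsq, hletter⟩ := exists_swap ⟨hs, ht, rfl⟩ hadj
      rw [leftQuotient_cons_of_adj (F.map_adj_iff.mpr hadj), ne_eq, Option.map_eq_none_iff] at hq
      have hF' : f * P.letterAction (P.step t') * P.letterAction (P.step s') =
          F * P.letterAction (P.step t) := by
        rw [mul_assoc, ← map_mul, hsq, map_mul, ← mul_assoc, hF]
      obtain ⟨L', hL', hval, hlen⟩ :=
        ih (f := f * P.letterAction (P.step t')) ⟨hs', hend ▸ hL⟩ <| by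
          rwa [RelIso.mul_apply, hletter, hsource, hF']
      refine ⟨t' :: L', ⟨ht', hL'⟩, ?_, Nat.succ_lt_succ hlen⟩
      simp only [pathValue_cons] at hval ⊢
      rw [hval, ← mul_assoc, hsq, mul_assoc]
    · exact absurd (leftQuotient_cons_of_not_adj (F.injective.ne hne)
        (F.map_adj_iff.not.mpr hadj) _) hq

lemma exists_shorter_of_not_isTraceReduced {f : letterGraph ι ≃g letterGraph ι}
    {L : List (SquierStep α ι)} (h : P.IsPath w L w')
    (hL : ¬ IsTraceReduced (letterGraph ι) ((P.pathLetters f L).map Prod.fst)) :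
    ∃ L', P.IsPath w L' w' ∧ P.pathValue L' = P.pathValue L ∧ L'.length < L.length := by
  induction L generalizing w f with
  | nil => exact absurd trivial hL
  | cons s L ih =>
    rcases not_and_or.mp hL with hq | hL
    · obtain ⟨L', hL', hval, hlen⟩ := exists_shorter_of_leftQuotient_ne_none h hq
      exact ⟨L', hL', hval, hlen.trans (Nat.lt_succ_self _)⟩
    · obtain ⟨L', hL', hval, hlen⟩ := ih h.2 hL
      exact ⟨s :: L', ⟨h.1, hL'⟩, by rw [pathValue_cons, pathValue_cons, hval],
        Nat.succ_lt_succ hlen⟩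

lemma pathValue_eq_one_of_magnusHom_eq_one {L : List (SquierStep α ι)} (hL : P.IsPath w L w')
    (h : P.magnusHom (P.pathValue L) = 1) : P.pathValue L = 1 := by
  induction hn : L.length using Nat.strong_induction_on generalizing L with
  | _ n ih =>
    subst hn
    by_cases hred : IsTraceReduced (letterGraph ι) ((P.pathLetters 1 L).map Prod.fst)
    · have hprod := P.left_magnusHom_mul_pathValue 1 L
      rw [one_mul, h, map_one, map_one] at hprod
      have hnil : P.pathLetters 1 L = [] := by
        by_contra hne
        exact prod_magnusUnit_ne_one hne hred (by simpa using hprod.symm)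
      cases L with
      | nil => rfl
      | cons s L => exact absurd hnil (List.cons_ne_nil _ _)
    · obtain ⟨L', hL', hval, hlen⟩ := exists_shorter_of_not_isTraceReduced hL hred
      rw [← hval] at h ⊢
      exact ih _ hlen hL' h rfl

lemma injective_magnusHom_comp_subtype (w : List α) :
    Function.Injective (P.magnusHom.comp (P.diagramGroup w).subtype) := by
  refine (injective_iff_map_eq_one _).mpr ?_
  rintro ⟨_, L, hL, rfl⟩ h
  exact Subtype.ext (pathValue_eq_one_of_magnusHom_eq_one hL h)

instance isMulTorsionFree_diagramGroup (w : List α) : IsMulTorsionFree (P.diagramGroup w) :=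
  (injective_magnusHom_comp_subtype w).isMulTorsionFree _

end SemigroupPresentation

end DiagramGroup

/-! ### The virtual Thompson group as a diagram group -/

noncomputable section VirtualThompson

open SemigroupPresentation

/-- The semigroup presentation over the alphabet `{x, v}` whose rules `(s, t)` identify each letter
`s` with each word `t` of length two. -/
def vfPresentation : SemigroupPresentation Letter (Letter × Tgt) where
  side r b := bif b then tw r.2 else [r.1]
  side_ne_nil r b := by cases b <;> simp [tw]
  side_injective r := by
    intro b c h
    cases b <;> cases c <;> simp [tw] at h ⊢

/-- The rule applied by the generator `X_{v→t}` of the first family. -/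
def G1.rule : G1 → Letter × Tgt
  | .vv => (.v, (.v, .v))
  | .vx => (.v, (.v, .x))
  | .xv => (.v, (.x, .v))

/-- The rule applied by the generator `X_{s→t,u}` of the third family. -/
def G3.rule : G3 → Letter × Tgt
  | .xvv => (.x, (.v, .v))
  | .xvx => (.x, (.v, .x))
  | .vxx => (.v, (.x, .x))
  | .vxv => (.v, (.x, .v))

lemma exists_rule_eq_or_fst_eq (r : Letter × Tgt) : (∃ c : G3, c.rule = r) ∨ r.2.1 = r.1 := by
  obtain ⟨_ | _, _ | _, _ | _⟩ := r
  exacts [.inr rfl, .inr rfl, .inl ⟨.xvx, rfl⟩, .inl ⟨.xvv, rfl⟩, .inl ⟨.vxx, rfl⟩,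
    .inl ⟨.vxv, rfl⟩, .inr rfl, .inr rfl]

lemma vfRel_fam3 (c : G3) (s : Letter) (t : Tgt) (p q : Word) :
    VFRel (X (.fam2 c.rule.1 s t q) * X (.fam3 c ⟨p ++ tw t ++ q, by simp [tw]⟩) *
      (X (.fam3 c ⟨p ++ [s] ++ q, by simp⟩) * X (.fam2 c.rule.2.1 s t q))⁻¹) := by
  cases c
  exacts [.r3 s t p q, .r4 s t p q, .r5 s t p q, .r6 s t p q]

/-- The edge of the Squier complex that corresponds to a generator of the virtual Thompson group. In
the second family only the first letter of the left context matters. -/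
def Gen.edge : Gen → SquierEdge Letter (Letter × Tgt)
  | .fam1 c => ⟨[], c.rule, []⟩
  | .fam2 a s t u => ⟨[a], (s, t), u⟩
  | .fam3 c u => ⟨[], c.rule, u⟩

/-- The value of an edge of the Squier complex in the virtual Thompson group. The edges without left
context that do not correspond to a generator have value `1`. -/
def vfEdge : SquierEdge Letter (Letter × Tgt) → VF
  | ⟨a :: _, (s, t), q⟩ => .of (.fam2 a s t q)
  | ⟨[], (.v, (.v, .v)), []⟩ => .of (.fam1 .vv)
  | ⟨[], (.v, (.v, .x)), []⟩ => .of (.fam1 .vx)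
  | ⟨[], (.v, (.x, .v)), []⟩ => .of (.fam1 .xv)
  | ⟨[], (.x, (.v, .v)), a :: q⟩ => .of (.fam3 .xvv ⟨a :: q, List.cons_ne_nil a q⟩)
  | ⟨[], (.x, (.v, .x)), a :: q⟩ => .of (.fam3 .xvx ⟨a :: q, List.cons_ne_nil a q⟩)
  | ⟨[], (.v, (.x, .x)), a :: q⟩ => .of (.fam3 .vxx ⟨a :: q, List.cons_ne_nil a q⟩)
  | ⟨[], (.v, (.x, .v)), a :: q⟩ => .of (.fam3 .vxv ⟨a :: q, List.cons_ne_nil a q⟩)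
  | _ => 1

lemma vfEdge_edge (g : Gen) : vfEdge g.edge = .of g := by
  rcases g with c | ⟨a, s, t, u⟩ | ⟨c, u, hu⟩
  · cases c <;> rfl
  · rfl
  · obtain ⟨a, q, rfl⟩ := List.exists_cons_of_ne_nil hu
    cases c <;> rfl

lemma vfEdge_eq_one {r : Letter × Tgt} (hr : r.2.1 = r.1) {q : Word} (hq : q ≠ []) :
    vfEdge ⟨[], r, q⟩ = 1 := by
  obtain ⟨a, q, rfl⟩ := List.exists_cons_of_ne_nil hq
  obtain ⟨_ | _, _ | _, _ | _⟩ := r <;> first | rfl | cases hr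

lemma VFRel.mk_eq {g h : FreeGroup Gen} (hgh : VFRel (g * h⁻¹)) :
    PresentedGroup.mk VFrels g = PresentedGroup.mk VFrels h :=
  PresentedGroup.mk_eq_mk_of_mul_inv_mem hgh

lemma vfEdge_square (p k q : Word) (r s : Letter × Tgt) :
    vfEdge ⟨p, r, k ++ [s.1] ++ q⟩ * vfEdge ⟨p ++ tw r.2 ++ k, s, q⟩ =
      vfEdge ⟨p ++ [r.1] ++ k, s, q⟩ * vfEdge ⟨p, r, k ++ tw s.2 ++ q⟩ := by
  rcases p with _ | ⟨a, -⟩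
  · rcases exists_rule_eq_or_fst_eq r with ⟨c, rfl⟩ | hr
    · have h := (vfRel_fam3 c s.1 s.2 k q).mk_eq.symm
      have hc (u : Word) (hu : u ≠ []) : vfEdge ⟨[], c.rule, u⟩ = .of (.fam3 c ⟨u, hu⟩) :=
        vfEdge_edge (.fam3 c ⟨u, hu⟩)
      rw [hc _ (by simp), hc _ (by simp [tw])]
      exact h
    · rw [vfEdge_eq_one hr (by simp), vfEdge_eq_one hr (by simp [tw]), one_mul, mul_one]
      exact congrArg (fun a ↦ PresentedGroup.of (Gen.fam2 a s.1 s.2 q)) hr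
  · exact (VFRel.r12 a r.1 s.1 r.2 s.2 k q).mk_eq

/-- The homomorphism to the virtual Thompson group given by the values of edges. -/
def toVF : vfPresentation.SquierGroup →* VF := lift vfEdge vfEdge_square

lemma toVF_edge (e : SquierEdge Letter (Letter × Tgt)) : toVF (vfPresentation.edge e) = vfEdge e :=
  lift_edge _ _ e

/-- The value of a path from `x` to the nonempty word `w` along edges on which `vfEdge` is trivial.
The value at the empty word is irrelevant. -/
def treeValue : Word → vfPresentation.SquierGroup
  | [] => 1
  | [.x] => 1
  | [.v] => vfPresentation.step (⟨[], (.x, (.x, .x)), []⟩, true) *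
      vfPresentation.step (⟨[], (.v, (.x, .x)), []⟩, false)
  | [y, z] => vfPresentation.step (⟨[], (.x, (y, z)), []⟩, true)
  | y :: y' :: z :: q =>
      treeValue (y :: z :: q) * vfPresentation.step (⟨[], (y, (y, y')), z :: q⟩, true)

lemma isDiagram_treeValue {w : Word} (hw : w ≠ []) :
    vfPresentation.IsDiagram [.x] w (treeValue w) := by
  have step (r : Letter × Tgt) (q : Word) (b : Bool) :=
    IsDiagram.step (P := vfPresentation) (⟨[], r, q⟩, b)
  induction w using treeValue.induct with
  | case1 => exact absurd rfl hw
  | case2 => exact treeValue.eq_2 ▸ .one _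
  | case3 => exact treeValue.eq_3 ▸ (step (.x, (.x, .x)) [] true).mul (step (.v, (.x, .x)) [] false)
  | case4 y z => exact treeValue.eq_4 y z ▸ step (.x, (y, z)) [] true
  | case5 y y' z q ih =>
    exact treeValue.eq_5 y y' z q ▸
      (ih (List.cons_ne_nil _ _)).mul (step (y, (y, y')) (z :: q) true)

lemma toVF_treeValue (w : Word) : toVF (treeValue w) = 1 := by
  induction w using treeValue.induct with
  | case5 y y' z q ih =>
    rw [treeValue, map_mul, ih, one_mul]
    exact (toVF_edge _).trans (vfEdge_eq_one rfl (List.cons_ne_nil z q))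
  | _ => simp [treeValue, step, toVF_edge, vfEdge]

lemma treeValue_cons_cons (y y' : Letter) {q : Word} (hq : q ≠ []) :
    treeValue (y :: y' :: q) =
      treeValue (y :: q) * vfPresentation.edge ⟨[], (y, (y, y')), q⟩ := by
  obtain ⟨z, q, rfl⟩ := List.exists_cons_of_ne_nil hq
  rw [treeValue]
  rfl

lemma vertex_ne_nil (e : SquierEdge Letter (Letter × Tgt)) (b : Bool) :
    vfPresentation.vertex e b ≠ [] := by
  simp [vertex, vfPresentation.side_ne_nil]

/-- The loop at `x` that runs through the tree to the source of an edge, along the edge, and back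
through the tree. -/
def loop (e : SquierEdge Letter (Letter × Tgt)) : vfPresentation.diagramGroup [.x] :=
  ⟨treeValue (vfPresentation.vertex e false) * vfPresentation.step (e, true) *
      (treeValue (vfPresentation.vertex e true))⁻¹,
    ((isDiagram_treeValue (vertex_ne_nil e false)).mul (IsDiagram.step (e, true))).mul
      (isDiagram_treeValue (vertex_ne_nil e true)).inv⟩

lemma toVF_loop (e : SquierEdge Letter (Letter × Tgt)) : toVF (loop e) = vfEdge e := by
  simp [loop, toVF_treeValue, step, toVF_edge]

lemma coe_loop_mul_loop {e f : SquierEdge Letter (Letter × Tgt)}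
    (h : vfPresentation.vertex e true = vfPresentation.vertex f false) :
    (loop e * loop f : vfPresentation.SquierGroup) =
      treeValue (vfPresentation.vertex e false) * (vfPresentation.edge e * vfPresentation.edge f) *
        (treeValue (vfPresentation.vertex f true))⁻¹ := by
  simp only [loop, step, cond_true, h]
  group

lemma loop_square (p k q : Word) (r s : Letter × Tgt) :
    loop ⟨p, r, k ++ [s.1] ++ q⟩ * loop ⟨p ++ tw r.2 ++ k, s, q⟩ =
      loop ⟨p ++ [r.1] ++ k, s, q⟩ * loop ⟨p, r, k ++ tw s.2 ++ q⟩ := by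
  have hsq := vfPresentation.edge_square p k q r s
  apply Subtype.ext
  rw [Subgroup.coe_mul, Subgroup.coe_mul, coe_loop_mul_loop, coe_loop_mul_loop]
  · simp only [vertex, vfPresentation, cond_true, cond_false, List.append_assoc] at hsq ⊢
    rw [hsq]
  all_goals simp only [vertex, vfPresentation, cond_true, cond_false, List.append_assoc]

lemma loop_cons (a : Letter) (p : Word) (r : Letter × Tgt) (q : Word) :
    loop ⟨a :: p, r, q⟩ = loop ⟨[a], r, q⟩ := by
  induction p with
  | nil => rfl
  | cons b p ih =>
    have tree (c : Bool) : treeValue (vfPresentation.vertex ⟨a :: b :: p, r, q⟩ c) =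
        treeValue (vfPresentation.vertex ⟨a :: p, r, q⟩ c) *
          vfPresentation.edge ⟨[], (a, (a, b)), p ++ vfPresentation.side r c ++ q⟩ :=
      treeValue_cons_cons a b (by simp [vfPresentation.side_ne_nil])
    have square : vfPresentation.edge ⟨a :: p, r, q⟩ =
        vfPresentation.edge ⟨[], (a, (a, b)), p ++ vfPresentation.side r false ++ q⟩ *
          vfPresentation.edge ⟨a :: b :: p, r, q⟩ *
          (vfPresentation.edge ⟨[], (a, (a, b)), p ++ vfPresentation.side r true ++ q⟩)⁻¹ :=
      eq_mul_inv_of_mul_eq (vfPresentation.edge_square [] p q (a, (a, b)) r).symm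
    rw [← ih]
    apply Subtype.ext
    simp only [loop, tree, square, step, cond_true]
    group

lemma lift_loop_eq_one {g : FreeGroup Gen} (hg : g ∈ VFrels) :
    FreeGroup.lift (fun g ↦ loop g.edge) g = 1 := by
  have fam3 (c : G3) (s : Letter) (t : Tgt) (p q : Word) :
      loop ⟨[c.rule.1], (s, t), q⟩ * loop ⟨[], c.rule, p ++ tw t ++ q⟩ =
        loop ⟨[], c.rule, p ++ [s] ++ q⟩ * loop ⟨[c.rule.2.1], (s, t), q⟩ := by
    have h := loop_square [] p q c.rule (s, t)
    rw [← loop_cons _ p, ← loop_cons _ (c.rule.2.2 :: p)]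
    exact h.symm
  rcases hg with ⟨a, s₁, s₂, t₁, t₂, p, q⟩ | ⟨s, t, p, q⟩ | ⟨s, t, p, q⟩ | ⟨s, t, p, q⟩ |
    ⟨s, t, p, q⟩
  all_goals
    simp only [map_mul, map_inv, X, FreeGroup.lift_apply_of, mul_inv_eq_one]
  · have h := loop_square [a] p q (s₁, t₁) (s₂, t₂)
    have h₁ := loop_cons a (tw t₁ ++ p) (s₂, t₂) q
    have h₂ := loop_cons a (s₁ :: p) (s₂, t₂) q
    exact (congrArg _ h₁.symm).trans (h.trans (congrArg (· * _) h₂))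
  · exact fam3 .xvv s t p q
  · exact fam3 .xvx s t p q
  · exact fam3 .vxx s t p q
  · exact fam3 .vxv s t p q

/-- The homomorphism from the virtual Thompson group to the diagram group with base `x` that sends a
generator to the loop through the corresponding edge. -/
def ofVF : VF →* vfPresentation.diagramGroup [.x] :=
  PresentedGroup.toGroup fun _ ↦ lift_loop_eq_one

lemma toVF_ofVF (g : VF) : toVF (ofVF g) = g := by
  have h : (toVF.comp (vfPresentation.diagramGroup [.x]).subtype).comp ofVF = .id VF := by
    ext g
    simpa [ofVF] using (toVF_loop g.edge).trans (vfEdge_edge g)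
  exact DFunLike.congr_fun h g

lemma injective_ofVF : Function.Injective ofVF :=
  .of_comp (f := fun g : vfPresentation.diagramGroup [.x] ↦ toVF g)
    (Function.LeftInverse.injective (g := id) toVF_ofVF)

instance : IsMulTorsionFree VF := injective_ofVF.isMulTorsionFree _

end VirtualThompson

/-- VF has the unique extraction of roots property: for all a, b ∈ VF and n ≥ 1,
aⁿ = bⁿ implies a = b. -/
theorem VF_unique_extraction_of_roots (a b : VF) (n : ℕ) (hn : 1 ≤ n)
    (h : a ^ n = b ^ n) : a = b := by
  exact pow_left_injective (Nat.one_le_iff_ne_zero.mp hn) h
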